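/- arXiv:math/0310473 — 3 statements merged into one kernel-verified Lean document; each statement's English description precedes it below -/
import Mathlib

section
/- (Gauss–Bonnet for ascending stratified curvature.) Let K be a finite n-dimensional simplicial complex embedded in Euclidean space, with n ≥ 2. Then Σ_{τ^p ∈ K} (−1)^p · K_a(τ^p) = χ^s(K), where the sum is over all simplices τ^p of K (p = dim τ^p), K_a denotes the ascending stratified curvature, and χ^s(K) is the stratified Euler characteristic of K. -/
open Filter MeasureTheory Geometry
open scoped BigOperators

noncomputable section

attribute [local instance 0] Classical.propDecidable

namespace AngleDefectPaper

/-- `N`-dimensional Euclidean space. -/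
abbrev Euc (N : ℕ) : Type := EuclideanSpace ℝ (Fin N)

variable {N : ℕ}

/-- The open simplex determined by a finite set of points: the intrinsic
(relative) interior of its convex hull. -/
def openSimplex (s : Finset (Euc N)) : Set (Euc N) :=
  intrinsicInterior ℝ (convexHull ℝ (s : Set (Euc N)))

/-- The normalized solid angle `α(η, σ)` of the simplex `σ` along its face `η`:
the fraction of a small sphere (in the affine span of `σ`) centered at a point of
the open face `η` that lies in `σ`, normalized so that the full sphere has
measure `1`.  It is computed as the limiting fraction of a small ambient ball
centered at the centroid of `η` that lies in the cylinder obtained by thickening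
`σ` in the directions orthogonal to its affine span. -/
def solidAngle (η σ : Finset (Euc N)) : ℝ :=
  limUnder (nhdsWithin (0 : ℝ) (Set.Ioi 0)) fun ε =>
    (volume (Metric.ball (η.centroid ℝ id) ε ∩
      {y : Euc N | ∃ c ∈ convexHull ℝ (σ : Set (Euc N)),
        ∃ w ∈ (vectorSpan ℝ (σ : Set (Euc N)))ᗮ, y = c + w})).toReal /
    (volume (Metric.ball (η.centroid ℝ id) ε)).toReal

/-- `Tcone r` is (a realization in the plane of) the open cone on `r` points:
`r` half-open segments emanating from the origin in pairwise distinct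
directions, glued at the origin.  For `r = 0` it is a single point. -/
def Tcone (r : ℕ) : Set (ℝ × ℝ) :=
  {0} ∪ ⋃ k ∈ Finset.range r,
    {p : ℝ × ℝ | ∃ t : ℝ, 0 ≤ t ∧ t < 1 ∧ p = t • ((1 : ℝ), (k : ℝ))}

/-- `x` has a neighborhood in `S` homeomorphic to `T_r × ℝ^{n-1}`, with the
homeomorphism taking `x` into the apex set `{cone point} × ℝ^{n-1}`. -/
def HasConeNbhd (n r : ℕ) (S : Set (Euc N)) (x : Euc N) : Prop :=
  ∃ U : Set (Euc N), U ∈ nhdsWithin x S ∧ U ⊆ S ∧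
    ∃ h : U ≃ₜ (Tcone r) × EuclideanSpace ℝ (Fin (n - 1)),
      ∀ hx : x ∈ U, ((h ⟨x, hx⟩).1 : ℝ × ℝ) = 0

/-- The set of points of `|K|` having a neighborhood of cone type `r`. -/
def csetAux (n : ℕ) (K : SimplicialComplex ℝ (Euc N)) (r : ℕ) : Set (Euc N) :=
  {x | x ∈ K.space ∧ HasConeNbhd n r K.space x}

/-- The sets `C_r(K)`: for `r ≠ 2` the points with a cone-type-`r` neighborhood,
and `C_2(K)` is the complement in `|K|` of the union of the others. -/
def cset (n : ℕ) (K : SimplicialComplex ℝ (Euc N)) (r : ℕ) : Set (Euc N) :=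
  if r = 2 then K.space \ ⋃ r' ∈ {r' : ℕ | r' ≠ 2}, csetAux n K r'
  else csetAux n K r

/-- The stratification rank `r(η) = r/2`, where `C_r(K)` is the (unique) set of
the stratification containing the open simplex of `η`. -/
def strRank (n : ℕ) (K : SimplicialComplex ℝ (Euc N)) (η : Finset (Euc N)) : ℝ :=
  if h : ∃ r : ℕ, r ≠ 2 ∧ openSimplex η ⊆ csetAux n K r then (h.choose : ℝ) / 2
  else 1

/-- The set of `n`-simplices of `K` having `η` as a face. -/
def nSimplicesOn (n : ℕ) (K : SimplicialComplex ℝ (Euc N)) (η : Finset (Euc N)) :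
    Set (Finset (Euc N)) :=
  {σ | σ ∈ K.faces ∧ σ.card = n + 1 ∧ η ⊆ σ}

/-- The generalized angle defect `D(η) = r(η) - Σ_{σⁿ ≻ η} α(η, σⁿ)`. -/
def defect (n : ℕ) (K : SimplicialComplex ℝ (Euc N)) (η : Finset (Euc N)) : ℝ :=
  strRank n K η - ∑ᶠ σ ∈ nSimplicesOn n K η, solidAngle η σ

/-- The angle defect sequence `a_m = 4 B_{m+2} (2^{m+2} - 1)/(m+2)`, where `B_k`
is the `k`-th Bernoulli number (with the convention `B_1 = -1/2`). -/
def ads (m : ℕ) : ℚ :=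
  4 * bernoulli (m + 2) * (2 ^ (m + 2) - 1) / (m + 2)

/-- The ascending stratified curvature of a simplex `τ` (of dimension
`p = τ.card - 1`) in the `n`-dimensional complex `K`. -/
def asc (n : ℕ) (K : SimplicialComplex ℝ (Euc N)) (τ : Finset (Euc N)) : ℝ :=
  (ads (τ.card - 1) : ℝ) * defect n K τ +
    (ads (τ.card - 1) : ℝ) / 2 *
      ∑ i ∈ Finset.Icc τ.card n,
        (-1 : ℝ) ^ (i - (τ.card - 1)) *
          ∑ᶠ η ∈ {η : Finset (Euc N) | η ∈ K.faces ∧ η.card = i + 1 ∧ τ ⊆ η},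
            defect n K η

/-- The stratified Euler characteristic `χˢ(K) = Σ_{η ∈ K} r(η) (-1)^{dim η}`. -/
def stratEuler (n : ℕ) (K : SimplicialComplex ℝ (Euc N)) : ℝ :=
  ∑ᶠ η ∈ K.faces, strRank n K η * (-1 : ℝ) ^ (η.card - 1)

/-- `fcount F k` is the number of `k`-dimensional simplices in `F`. -/
def fcount (F : Set (Finset (Euc N))) (k : ℕ) : ℕ :=
  {s ∈ F | s.card = k + 1}.ncard

/-- The combinatorial Euler characteristic `χ(F) = Σ_k (-1)^k f_k(F)`. -/
def eulerChar (F : Set (Finset (Euc N))) : ℤ :=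
  ∑ᶠ k : ℕ, (-1 : ℤ) ^ k * fcount F k

/-- The link of `η` in `K`: all simplices `ω` of `K` disjoint from `η` such
that the join `η ∗ ω` is a simplex of `K`. -/
def linkFaces (K : SimplicialComplex ℝ (Euc N)) (η : Finset (Euc N)) :
    Set (Finset (Euc N)) :=
  {ω | ω ∈ K.faces ∧ Disjoint η ω ∧ η ∪ ω ∈ K.faces}

/-- `K` is an `n`-dimensional simplicial complex. -/
def IsNDim (n : ℕ) (K : SimplicialComplex ℝ (Euc N)) : Prop :=
  (∀ s ∈ K.faces, s.card ≤ n + 1) ∧ ∃ s ∈ K.faces, s.card = n + 1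

/-- `L` is a subdivision of `K`: same underlying space, and every open simplex
of `L` is contained in an open simplex of `K`. -/
def IsSubdivision (K L : SimplicialComplex ℝ (Euc N)) : Prop :=
  L.space = K.space ∧ ∀ s ∈ L.faces, ∃ t ∈ K.faces, openSimplex s ⊆ openSimplex t

/-!
The total ascending curvature is the alternating sum of the defects. The defect of a simplex `η`
enters it through `K_a(η)` with coefficient `a_{dim η}` and through `K_a(τ)`, for each proper face
`τ` of `η`, with coefficient `a_{dim τ} / 2`, up to a common sign. As `a_m = -2 E_{m+1}(0)` for the
Euler polynomials `E_k`, the relation `(∑ E_k(0) t^k / k!) (e^t + 1) = 2` says that these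
coefficients add up to `1`.

In the alternating sum of the defects, the solid angles cancel `n`-simplex by `n`-simplex, by Gram's
relation. To see the latter, thicken the simplex `σ` orthogonally to its affine span: near the
centroid of a face `η` it becomes the cone on which the linear parts of the barycentric coordinates
at the vertices off `η` are nonnegative. These linear parts add up to `0`, so for almost every
vector `u` the vertices with negative coordinate form a nonempty proper subset of `σ`. The faces
whose cone contains `u` are those between this subset and `σ`, and their alternating count is `0`.
-/

section Bernoulli

open PowerSeries

/-- The value at `0` of the `k`-th Euler polynomial `E_k`, whose exponential generating function is
`2 e^(xt) / (e^t + 1)`. -/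
def eulerAtZero (k : ℕ) : ℚ :=
  -2 * bernoulli (k + 1) * (2 ^ (k + 1) - 1) / (k + 1)

lemma eulerAtZero_zero : eulerAtZero 0 = 1 := by
  norm_num [eulerAtZero]

lemma ads_eq_eulerAtZero (m : ℕ) : ads m = -2 * eulerAtZero (m + 1) := by
  simp only [ads, eulerAtZero]
  push_cast
  ring

lemma rescale_two_bernoulliPowerSeries_mul_exp_add_one :
    rescale (2 : ℚ) (bernoulliPowerSeries ℚ) * (exp ℚ + 1) = 2 * bernoulliPowerSeries ℚ := by
  have hB : bernoulliPowerSeries ℚ * (exp ℚ - 1) = X := bernoulliPowerSeries_mul_exp_sub_one ℚ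
  have hB₂ : rescale (2 : ℚ) (bernoulliPowerSeries ℚ) * (exp ℚ ^ 2 - 1) = 2 * X := by
    have h := congrArg (rescale (2 : ℚ)) hB
    rw [map_mul, map_sub, map_one, rescale_X, map_ofNat] at h
    rw [exp_pow_eq_rescale_exp, Nat.cast_ofNat, h]
  have hexp : exp ℚ - 1 ≠ 0 := right_ne_zero_of_mul (hB ▸ X_ne_zero)
  apply mul_right_cancel₀ hexp
  linear_combination hB₂ - 2 * hB

lemma X_mul_mk_eulerAtZero :
    X * (mk fun k ↦ eulerAtZero k / k.factorial) =
      2 * (bernoulliPowerSeries ℚ - rescale (2 : ℚ) (bernoulliPowerSeries ℚ)) := by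
  rw [← map_ofNat C 2]
  ext (_ | k)
  · rw [coeff_zero_X_mul, coeff_C_mul, map_sub, coeff_rescale, pow_zero, one_mul, sub_self,
      mul_zero]
  · have hk : (k : ℚ) + 1 ≠ 0 := by positivity
    simp only [coeff_succ_X_mul, coeff_C_mul, map_sub, coeff_rescale, coeff_mk,
      bernoulliPowerSeries, eulerAtZero, Nat.factorial_succ, eq_ratCast, Rat.cast_id]
    push_cast
    field_simp
    ring

lemma mk_eulerAtZero_mul_exp_add_one :
    (mk fun k ↦ eulerAtZero k / k.factorial) * (exp ℚ + 1) = 2 := by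
  apply mul_left_cancel₀ (X_ne_zero (R := ℚ))
  linear_combination (exp ℚ + 1) * X_mul_mk_eulerAtZero
    - 2 * rescale_two_bernoulliPowerSeries_mul_exp_add_one
    + 2 * bernoulliPowerSeries_mul_exp_sub_one ℚ

lemma sum_range_choose_mul_eulerAtZero {m : ℕ} (hm : m ≠ 0) :
    ∑ k ∈ Finset.range (m + 1), (m.choose k : ℚ) * eulerAtZero k + eulerAtZero m = 0 := by
  have hcoeff := congrArg (coeff m) mk_eulerAtZero_mul_exp_add_one
  rw [mul_add, mul_one, map_add, coeff_mul, coeff_mk, ← map_ofNat C 2, coeff_C, if_neg hm,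
    Finset.Nat.sum_antidiagonal_eq_sum_range_succ_mk] at hcoeff
  have hm! : (m.factorial : ℚ) ≠ 0 := by positivity
  calc
    _ = m.factorial * (∑ k ∈ Finset.range (m + 1),
          coeff k (mk fun k ↦ eulerAtZero k / k.factorial) * coeff (m - k) (exp ℚ)
        + eulerAtZero m / m.factorial) := by
      rw [mul_add, Finset.mul_sum, mul_div_cancel₀ _ hm!]
      congr 1
      refine Finset.sum_congr rfl fun k hk ↦ ?_
      rw [Nat.cast_choose ℚ (Finset.mem_range_succ_iff.mp hk), coeff_mk, coeff_exp]
      simp only [one_div, eq_ratCast, Rat.cast_id]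
      field_simp
    _ = 0 := by rw [hcoeff, mul_zero]

end Bernoulli

section Finset

open Finset

variable {α : Type*}

lemma sum_ssubsets_eulerAtZero [DecidableEq α] {s : Finset α} (hs : s.Nonempty) :
    ∑ t ∈ s.ssubsets, eulerAtZero #t + 2 * eulerAtZero #s = 0 := by
  have hsum := sum_range_choose_mul_eulerAtZero hs.card_pos.ne'
  simp only [← nsmul_eq_mul, ← sum_powerset_apply_card eulerAtZero,
    ← sum_erase_add _ _ (mem_powerset_self s)] at hsum
  rw [ssubsets]
  linarith

lemma ads_add_sum_ssubsets [DecidableEq α] {s : Finset α} (hs : s.Nonempty) :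
    ads (#s - 1) + ∑ t ∈ s.ssubsets.erase ∅, ads (#t - 1) / 2 = 1 := by
  have hads {t : Finset α} (ht : t.Nonempty) : ads (#t - 1) = -2 * eulerAtZero #t := by
    rw [ads_eq_eulerAtZero, Nat.sub_add_cancel ht.card_pos]
  have hproper : ∑ t ∈ s.ssubsets.erase ∅, ads (#t - 1) / 2 =
      -∑ t ∈ s.ssubsets.erase ∅, eulerAtZero #t := by
    rw [← sum_neg_distrib]
    refine sum_congr rfl fun t ht ↦ ?_
    rw [hads (nonempty_iff_ne_empty.mpr (ne_of_mem_erase ht))]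
    ring
  have hsum := sum_ssubsets_eulerAtZero hs
  rw [← add_sum_erase _ _ (empty_mem_ssubsets hs), card_empty, eulerAtZero_zero] at hsum
  rw [hads hs, hproper]
  linarith

lemma sum_Icc_neg_one_pow_card [DecidableEq α] {R : Type*} [Ring R] {s t : Finset α}
    (h : s ⊂ t) : ∑ u ∈ Icc s t, (-1 : R) ^ #u = 0 := by
  have halt : ∑ u ∈ (t \ s).powerset, (-1 : R) ^ #u = 0 :=
    mod_cast congrArg (Int.cast (R := R))
      (sum_powerset_neg_one_pow_card_of_nonempty (sdiff_nonempty.mpr h.not_subset))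
  have hdisj {u : Finset α} (hu : u ∈ (t \ s).powerset) : Disjoint s u :=
    disjoint_sdiff.mono_right (mem_powerset.mp hu)
  have hinj : Set.InjOn (s ∪ ·) ((t \ s).powerset : Set (Finset α)) := fun u hu v hv huv ↦
    (union_sdiff_cancel_left (hdisj hu)).symm.trans <|
      (congrArg (· \ s) huv).trans (union_sdiff_cancel_left (hdisj hv))
  rw [Icc_eq_image_powerset h.subset, sum_image hinj]
  calc
    _ = ∑ u ∈ (t \ s).powerset, (-1 : R) ^ #s * (-1) ^ #u :=
      sum_congr rfl fun u hu ↦ by rw [card_union_of_disjoint (hdisj hu), pow_add]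
    _ = 0 := by rw [← mul_sum, halt, mul_zero]

/-- If the entries of `x` sum to zero but do not all vanish, the faces `t` counted here are those
between the nonempty proper subset on which `x` is negative and `s`. -/
lemma sum_neg_one_pow_card_of_nonneg_off [DecidableEq α] {s : Finset α} {x : α → ℝ}
    (hsum : ∑ i ∈ s, x i = 0) (hx : ∃ i ∈ s, x i ≠ 0) :
    ∑ t ∈ s.powerset.erase ∅ with ∀ i ∈ s \ t, 0 ≤ x i, (-1 : ℝ) ^ #t = 0 := by
  set neg := {i ∈ s | x i < 0}
  obtain ⟨p, hps, hp⟩ := exists_pos_of_sum_zero_of_exists_nonzero x hsum hx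
  obtain ⟨q, hqs, hq⟩ := exists_pos_of_sum_zero_of_exists_nonzero (-x)
    (by simpa using hsum) (by simpa using hx)
  have hqneg : q ∈ neg := by simpa [neg, hqs] using hq
  have hssub : neg ⊂ s := filter_ssubset.mpr ⟨p, hps, hp.not_gt⟩
  convert sum_Icc_neg_one_pow_card hssub using 2
  ext t
  simp only [mem_filter, mem_erase, mem_powerset, mem_Icc, Finset.mem_sdiff, and_imp]
  constructor
  · rintro ⟨⟨-, hts⟩, ht⟩
    refine ⟨fun i hi ↦ ?_, hts⟩
    have ⟨his, hxi⟩ := mem_filter.mp hi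
    by_contra hit
    exact hxi.not_ge (ht i his hit)
  · rintro ⟨hneg, hts⟩
    refine ⟨⟨ne_empty_of_mem (hneg hqneg), hts⟩, fun i his hit ↦ ?_⟩
    by_contra! hxi
    exact hit (hneg (mem_filter.mpr ⟨his, hxi⟩))

lemma neg_one_pow_card_sub_one {R : Type*} [Ring R] {s : Finset α} (hs : s.Nonempty) :
    (-1 : R) ^ (#s - 1) = -(-1) ^ #s := by
  rw [← Nat.sub_add_cancel hs.card_pos, pow_succ, Nat.add_sub_cancel, mul_neg_one, neg_neg]

variable [DecidableEq α] {F : Finset (Finset α)}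

lemma filter_subset_eq_powerset_erase_empty
    (hF : IsRelLowerSet (F : Set (Finset α)) Finset.Nonempty) {s : Finset α} (hs : s ∈ F) :
    {t ∈ F | t ⊆ s} = s.powerset.erase ∅ := by
  ext t
  simp only [mem_filter, mem_erase, mem_powerset, ← nonempty_iff_ne_empty]
  exact ⟨fun ⟨htF, hts⟩ ↦ ⟨hF.prop_of_mem htF, hts⟩, fun ⟨ht, hts⟩ ↦ ⟨hF.mem_of_le hs hts ht, hts⟩⟩

lemma filter_ssubset_eq_ssubsets_erase_empty
    (hF : IsRelLowerSet (F : Set (Finset α)) Finset.Nonempty) {s : Finset α} (hs : s ∈ F) :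
    {t ∈ F | t ⊂ s} = s.ssubsets.erase ∅ := by
  ext t
  simp only [mem_filter, mem_erase, mem_ssubsets, ← nonempty_iff_ne_empty]
  exact ⟨fun ⟨htF, hts⟩ ↦ ⟨hF.prop_of_mem htF, hts⟩,
    fun ⟨ht, hts⟩ ↦ ⟨hF.mem_of_le hs hts.subset ht, hts⟩⟩

lemma sum_Icc_sum_filter_card {M : Type*} [AddCommMonoid M] {n : ℕ}
    (hF : ∀ t ∈ F, #t ≤ n + 1) (s : Finset α) (f : ℕ → Finset α → M) :
    ∑ i ∈ Icc #s n, ∑ t ∈ F with #t = i + 1 ∧ s ⊆ t, f i t =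
      ∑ t ∈ F with s ⊂ t, f (#t - 1) t := by
  have hmaps : ∀ t ∈ {t ∈ F | s ⊂ t}, #t - 1 ∈ Icc #s n := fun t ht ↦ by
    obtain ⟨htF, hst⟩ := mem_filter.mp ht
    exact mem_Icc.mpr ⟨Nat.le_sub_one_of_lt (card_lt_card hst), Nat.sub_le_of_le_add (hF t htF)⟩
  rw [← sum_fiberwise_of_maps_to hmaps]
  refine sum_congr rfl fun i hi ↦ ?_
  have hiff (t : Finset α) : #t = i + 1 ∧ s ⊆ t ↔ s ⊂ t ∧ #t - 1 = i := by
    have hsi := (mem_Icc.mp hi).1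
    constructor
    · rintro ⟨ht, hst⟩
      exact ⟨hst.ssubset_of_ne (by rintro rfl; lia), by rw [ht, Nat.add_sub_cancel]⟩
    · rintro ⟨hst, rfl⟩
      exact ⟨(Nat.sub_add_cancel (Nat.zero_lt_of_lt (card_lt_card hst))).symm, hst.subset⟩
  simp only [filter_filter, hiff]
  exact sum_congr rfl fun t ht ↦ by rw [(mem_filter.mp ht).2.2]

end Finset

section Cone

open scoped Pointwise

variable {ι E : Type*} [AddCommGroup E] [Module ℝ E]

/-- The cone cut out by the linear functionals `l i` with `i` in `s` but not in `t`. When the `l i`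
are the linear parts of the barycentric coordinates of a simplex `s`, this is the tangent cone of
`s` along its face `t`, thickened in the directions orthogonal to `s`. -/
def faceCone [DecidableEq ι] (l : ι → E →ₗ[ℝ] ℝ) (t s : Finset ι) : Set E :=
  {u | ∀ i ∈ s \ t, 0 ≤ l i u}

variable [DecidableEq ι] {l : ι → E →ₗ[ℝ] ℝ} {s t : Finset ι}

lemma smul_faceCone {c : ℝ} (hc : 0 < c) : c • faceCone l t s = faceCone l t s := by
  ext u
  simp [faceCone, Set.mem_smul_set_iff_inv_smul_mem₀ hc.ne', inv_pos.mpr hc]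

end Cone

section Measure

open scoped Pointwise

variable {E : Type*} [NormedAddCommGroup E] [NormedSpace ℝ E] [FiniteDimensional ℝ E]

lemma isClosed_faceCone {ι : Type*} [DecidableEq ι] (l : ι → E →ₗ[ℝ] ℝ) (t s : Finset ι) :
    IsClosed (faceCone l t s) := by
  simp only [faceCone, Set.ofPred_forall]
  exact isClosed_biInter fun i _ ↦
    isClosed_le continuous_const (l i).continuous_of_finiteDimensional

variable [MeasurableSpace E] [BorelSpace E] (μ : Measure E) [μ.IsAddHaarMeasure]

lemma sum_neg_one_pow_card_mul_measureReal_inter_faceCone {ι : Type*} [DecidableEq ι]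
    {l : ι → E →ₗ[ℝ] ℝ} {s : Finset ι} (hsum : ∑ i ∈ s, l i = 0) (hl : ∃ i ∈ s, l i ≠ 0)
    {B : Set E} (hB : MeasurableSet B) (hμB : μ B ≠ ⊤) :
    ∑ t ∈ s.powerset.erase ∅, (-1) ^ t.card * μ.real (B ∩ faceCone l t s) = 0 := by
  obtain ⟨i, his, hi⟩ := hl
  have hmeas (t : Finset ι) : MeasurableSet (B ∩ faceCone l t s) :=
    hB.inter (isClosed_faceCone l t s).measurableSet
  have hint (t : Finset ι) : Integrable ((B ∩ faceCone l t s).indicator (1 : E → ℝ)) μ :=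
    (integrable_indicator_iff (hmeas t)).mpr <|
      integrableOn_const (measure_ne_top_of_subset Set.inter_subset_left hμB)
  have hker : ∀ᵐ u ∂μ, u ∉ LinearMap.ker (l i) :=
    measure_eq_zero_iff_ae_notMem.mp <|
      Measure.addHaar_submodule μ _ (mt LinearMap.ker_eq_top.mp hi)
  simp only [← integral_indicator_one (hmeas _), ← integral_const_mul]
  rw [← integral_finsetSum _ fun t _ ↦ (hint t).const_mul _]
  apply integral_eq_zero_of_ae
  filter_upwards [hker] with u hu
  by_cases huB : u ∈ B
  · have hsumu : ∑ j ∈ s, l j u = 0 := by simpa using LinearMap.congr_fun hsum u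
    simpa [Set.indicator_apply, faceCone, huB, Finset.sum_filter] using
      sum_neg_one_pow_card_of_nonneg_off hsumu ⟨i, his, hu⟩
  · simp [huB]

/-- Near the apex, both the ball and the cone scale like the unit ball, so the fraction of the ball
filled by the cone is eventually constant. -/
lemma tendsto_measureReal_ball_inter_div_of_eventually_mem_iff {C T : Set E} {z : E}
    (hT : ∀ c : ℝ, 0 < c → c • T = T) (hC : ∀ᶠ y in nhds z, y ∈ C ↔ y - z ∈ T) :
    Tendsto (fun ε ↦ μ.real (Metric.ball z ε ∩ C) / μ.real (Metric.ball z ε))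
      (nhdsWithin 0 (Set.Ioi 0))
      (nhds (μ.real (Metric.ball 0 1 ∩ T) / μ.real (Metric.ball 0 1))) := by
  obtain ⟨δ, hδ, hball⟩ := Metric.eventually_nhds_iff_ball.mp hC
  refine tendsto_const_nhds.congr' ?_
  filter_upwards [Ioo_mem_nhdsGT hδ] with ε ⟨hε, hεδ⟩
  have hscale (A : Set E) : μ.real (z +ᵥ ε • A) = ε ^ Module.finrank ℝ E * μ.real A := by
    simp [measureReal_def, measure_vadd, Measure.addHaar_smul, abs_of_pos hε, hε.le]
  have hinter : Metric.ball z ε ∩ C = z +ᵥ ε • (Metric.ball 0 1 ∩ T) := by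
    rw [Set.smul_set_inter₀ hε.ne', hT ε hε, Set.vadd_set_inter, affinity_unitBall hε]
    ext y
    simp only [Set.mem_inter_iff, Set.mem_vadd_set_iff_neg_vadd_mem, vadd_eq_add,
      neg_add_eq_sub]
    exact and_congr_right fun hy ↦ hball y (Metric.ball_subset_ball hεδ.le hy)
  rw [hinter, ← affinity_unitBall hε z, hscale, hscale, mul_div_mul_left _ _ (by positivity)]

end Measure

section Barycentric

variable {E : Type*} [NormedAddCommGroup E] [InnerProductSpace ℝ E] {σ : Finset E}

instance finiteDimensional_direction_affineSpan_finset :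
    FiniteDimensional ℝ (affineSpan ℝ (σ : Set E)).direction :=
  finiteDimensional_direction_affineSpan_of_finite ℝ σ.finite_toSet

/-- The vertices of a nondegenerate simplex as an affine basis of its affine span. -/
def affineSpanBasis [Nonempty σ] (hσ : AffineIndependent ℝ ((↑) : σ → E)) :
    AffineBasis σ ℝ (affineSpan ℝ (σ : Set E)) where
  toFun v := ⟨v, subset_affineSpan ℝ _ v.2⟩
  ind' := .of_comp (affineSpan ℝ (σ : Set E)).subtype hσ
  tot' := by
    convert affineSpan_coe_preimage_eq_top (k := ℝ) (σ : Set E)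
    ext v
    simp [Subtype.ext_iff]

/-- The barycentric coordinate of a simplex `σ` at its vertex `v`, extended to the ambient space
through the orthogonal projection onto the affine span of `σ`. It is `0` if `v` is not a vertex. -/
def barycentricCoord (hσ : AffineIndependent ℝ ((↑) : σ → E)) (v : E) : E →ᵃ[ℝ] ℝ :=
  if hv : v ∈ σ then
    have : Nonempty σ := ⟨v, hv⟩
    ((affineSpanBasis hσ).coord ⟨v, hv⟩).comp
      (EuclideanGeometry.orthogonalProjection (affineSpan ℝ (σ : Set E))).toAffineMap
  else 0

variable (hσ : AffineIndependent ℝ ((↑) : σ → E))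

lemma barycentricCoord_coe [Nonempty σ] (v : σ) (y : E) :
    barycentricCoord hσ v y = (affineSpanBasis hσ).coord v
      (EuclideanGeometry.orthogonalProjection (affineSpan ℝ (σ : Set E)) y) := by
  simp [barycentricCoord]

lemma barycentricCoord_apply_vertex {v w : E} (hv : v ∈ σ) (hw : w ∈ σ) :
    barycentricCoord hσ v w = if v = w then 1 else 0 := by
  have : Nonempty σ := ⟨v, hv⟩
  have hproj : EuclideanGeometry.orthogonalProjection (affineSpan ℝ (σ : Set E)) w =
      affineSpanBasis hσ ⟨w, hw⟩ :=
    EuclideanGeometry.orthogonalProjection_mem_subspace_eq_self (affineSpanBasis hσ ⟨w, hw⟩)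
  rw [barycentricCoord_coe hσ ⟨v, hv⟩, hproj, AffineBasis.coord_apply]
  simp

lemma sum_barycentricCoord (hne : σ.Nonempty) (y : E) :
    ∑ v ∈ σ, barycentricCoord hσ v y = 1 := by
  have := hne.coe_sort
  simp only [← Finset.sum_coe_sort σ, barycentricCoord_coe, AffineBasis.sum_coord_apply_eq_one]

lemma sum_barycentricCoord_linear : ∑ v ∈ σ, (barycentricCoord hσ v).linear = 0 := by
  ext u
  rcases σ.eq_empty_or_nonempty with rfl | hne
  · simp
  have hlinear (v : E) : (barycentricCoord hσ v).linear u =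
      barycentricCoord hσ v u - barycentricCoord hσ v 0 := by
    simpa using (barycentricCoord hσ v).linearMap_vsub u 0
  simp [hlinear, Finset.sum_sub_distrib, sum_barycentricCoord hσ hne]

lemma barycentricCoord_centroid {v : E} (hv : v ∈ σ) {η : Finset E} (hη : η.Nonempty)
    (hησ : η ⊆ σ) :
    barycentricCoord hσ v (η.centroid ℝ id) = if v ∈ η then (η.card : ℝ)⁻¹ else 0 := by
  have hweights := η.sum_centroidWeights_eq_one_of_nonempty ℝ hη
  calc
    _ = ∑ w ∈ η, (η.card : ℝ)⁻¹ * barycentricCoord hσ v w := by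
      rw [Finset.centroid_def, Finset.map_affineCombination _ _ _ hweights,
        Finset.affineCombination_eq_linear_combination _ _ _ hweights]
      simp
    _ = ∑ w ∈ η, (η.card : ℝ)⁻¹ * if v = w then 1 else 0 :=
      Finset.sum_congr rfl fun w hw ↦ by rw [barycentricCoord_apply_vertex hσ hv (hησ hw)]
    _ = _ := by simp

lemma sum_barycentricCoord_smul [Nonempty σ] (y : E) :
    ∑ v ∈ σ, barycentricCoord hσ v y • v =
      (EuclideanGeometry.orthogonalProjection (affineSpan ℝ (σ : Set E)) y : E) := by
  set q := EuclideanGeometry.orthogonalProjection (affineSpan ℝ (σ : Set E)) y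
  have hcoord := (affineSpanBasis hσ).sum_coord_apply_eq_one q
  calc
    _ = ∑ v, (affineSpanBasis hσ).coord v q • (v : E) := by
      simp only [← Finset.sum_coe_sort σ, barycentricCoord_coe, q]
    _ = (affineSpan ℝ (σ : Set E)).subtype
          (Finset.univ.affineCombination ℝ (affineSpanBasis hσ)
            fun v ↦ (affineSpanBasis hσ).coord v q) := by
      rw [Finset.map_affineCombination _ _ _ hcoord,
        Finset.affineCombination_eq_linear_combination _ _ _ hcoord]
      rfl
    _ = q := by rw [AffineBasis.affineCombination_coord_eq_self]; rfl

lemma setOf_convexHull_add_orthogonal_eq (hne : σ.Nonempty) :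
    {y : E | ∃ c ∈ convexHull ℝ (σ : Set E), ∃ w ∈ (vectorSpan ℝ (σ : Set E))ᗮ, y = c + w} =
      {y | ∀ v ∈ σ, 0 ≤ barycentricCoord hσ v y} := by
  have := hne.coe_sort
  ext y
  constructor
  · rintro ⟨c, hc, w, hw, rfl⟩ v hv
    have hproj : EuclideanGeometry.orthogonalProjection (affineSpan ℝ (σ : Set E)) (c + w) =
        EuclideanGeometry.orthogonalProjection (affineSpan ℝ (σ : Set E)) c := by
      rw [EuclideanGeometry.orthogonalProjection_eq_orthogonalProjection_iff_vsub_mem]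
      simpa [direction_affineSpan] using hw
    have hvertices : (σ : Set E) ⊆ barycentricCoord hσ v ⁻¹' Set.Ici 0 := fun u hu ↦ by
      rw [Set.mem_preimage, barycentricCoord_apply_vertex hσ hv hu, Set.mem_Ici]
      split_ifs <;> norm_num
    rw [barycentricCoord_coe hσ ⟨v, hv⟩, hproj, ← barycentricCoord_coe]
    exact convexHull_min hvertices ((convex_Ici 0).affine_preimage _) hc
  · intro hy
    refine ⟨∑ v ∈ σ, barycentricCoord hσ v y • v, Finset.mem_convexHull'.mpr
      ⟨fun v ↦ barycentricCoord hσ v y, hy, sum_barycentricCoord hσ hne y, rfl⟩,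
      y - ∑ v ∈ σ, barycentricCoord hσ v y • v, ?_, (add_sub_cancel _ _).symm⟩
    rw [sum_barycentricCoord_smul, ← direction_affineSpan]
    exact EuclideanGeometry.vsub_orthogonalProjection_mem_direction_orthogonal _ y

end Barycentric

section SolidAngle

variable {σ : Finset (Euc N)}

/-- Near the centroid of `η`, the coordinates at the vertices of `η` are positive and the others
are linear, so the thickened simplex is a translate of its tangent cone there. -/
lemma eventually_mem_iff_sub_centroid_mem_faceCone
    (hσ : AffineIndependent ℝ ((↑) : σ → Euc N)) {η : Finset (Euc N)} (hη : η.Nonempty)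
    (hησ : η ⊆ σ) :
    ∀ᶠ y in nhds (η.centroid ℝ id), y ∈ {y | ∀ v ∈ σ, 0 ≤ barycentricCoord hσ v y} ↔
      y - η.centroid ℝ id ∈ faceCone (fun v ↦ (barycentricCoord hσ v).linear) η σ := by
  set z := η.centroid ℝ id
  have hpos : ∀ᶠ y in nhds z, ∀ v ∈ η, 0 < barycentricCoord hσ v y := by
    refine (eventually_all_finset η).mpr fun v hv ↦ ?_
    have hzv : 0 < barycentricCoord hσ v z := by
      rw [barycentricCoord_centroid hσ (hησ hv) hη hησ, if_pos hv]
      simpa using hη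
    exact (barycentricCoord hσ v).continuous_of_finiteDimensional.continuousAt.eventually_const_lt
      hzv
  filter_upwards [hpos] with y hy
  have hlinear {v : Euc N} (hv : v ∈ σ \ η) :
      (barycentricCoord hσ v).linear (y - z) = barycentricCoord hσ v y := by
    obtain ⟨hvσ, hvη⟩ := Finset.mem_sdiff.mp hv
    rw [← vsub_eq_sub, AffineMap.linearMap_vsub, barycentricCoord_centroid hσ hvσ hη hησ,
      if_neg hvη, vsub_eq_sub, sub_zero]
  constructor
  · intro h v hv
    exact (h v (Finset.mem_sdiff.mp hv).1).trans_eq (hlinear hv).symm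
  · intro h v hv
    by_cases hvη : v ∈ η
    · exact (hy v hvη).le
    · have hvση := Finset.mem_sdiff.mpr ⟨hv, hvη⟩
      exact (h v hvση).trans_eq (hlinear hvση)

lemma solidAngle_eq_measureReal_ball_inter_faceCone
    (hσ : AffineIndependent ℝ ((↑) : σ → Euc N)) {η : Finset (Euc N)} (hη : η.Nonempty)
    (hησ : η ⊆ σ) :
    solidAngle η σ =
      volume.real (Metric.ball 0 1 ∩ faceCone (fun v ↦ (barycentricCoord hσ v).linear) η σ) /
        volume.real (Metric.ball (0 : Euc N) 1) := by
  rw [solidAngle, setOf_convexHull_add_orthogonal_eq hσ (hη.mono hησ)]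
  exact (tendsto_measureReal_ball_inter_div_of_eventually_mem_iff volume
    (fun _ ↦ smul_faceCone) (eventually_mem_iff_sub_centroid_mem_faceCone hσ hη hησ)).limUnder_eq

/-- **Gram's relation** -/
theorem sum_neg_one_pow_mul_solidAngle (hσ : AffineIndependent ℝ ((↑) : σ → Euc N))
    (hcard : 1 < σ.card) :
    ∑ η ∈ σ.powerset.erase ∅, (-1 : ℝ) ^ (η.card - 1) * solidAngle η σ = 0 := by
  obtain ⟨v, hv, w, hw, hvw⟩ := Finset.one_lt_card.mp hcard
  have hlinear : (barycentricCoord hσ v).linear ≠ 0 := fun h ↦ by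
    have hvsub := (barycentricCoord hσ v).linearMap_vsub v w
    simp [h, barycentricCoord_apply_vertex hσ hv, hv, hw, hvw] at hvsub
  have hgram := sum_neg_one_pow_card_mul_measureReal_inter_faceCone (volume : Measure (Euc N))
    (sum_barycentricCoord_linear hσ) ⟨v, hv, hlinear⟩ measurableSet_ball
    (measure_ball_lt_top (x := 0) (r := 1)).ne
  calc
    _ = ∑ η ∈ σ.powerset.erase ∅, (-1) ^ η.card *
          volume.real (Metric.ball 0 1 ∩ faceCone (fun v ↦ (barycentricCoord hσ v).linear) η σ) /
          -volume.real (Metric.ball (0 : Euc N) 1) := by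
      refine Finset.sum_congr rfl fun η hη ↦ ?_
      obtain ⟨hne, hησ⟩ := Finset.mem_erase.mp hη
      have hηne := Finset.nonempty_iff_ne_empty.mpr hne
      rw [neg_one_pow_card_sub_one hηne, solidAngle_eq_measureReal_ball_inter_faceCone hσ hηne
        (Finset.mem_powerset.mp hησ)]
      ring
    _ = 0 := by rw [← Finset.sum_div, hgram, zero_div]

end SolidAngle

section Complex

open Finset

lemma finsum_mem_setOf_mem_and {α M : Type*} [AddCommMonoid M] {S : Set α} (hS : S.Finite)
    (p : α → Prop) [DecidablePred p] (f : α → M) :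
    ∑ᶠ a ∈ {a | a ∈ S ∧ p a}, f a = ∑ a ∈ hS.toFinset with p a, f a := by
  rw [← finsum_mem_coe_finset]
  simp

variable {n : ℕ} {K : SimplicialComplex ℝ (Euc N)} (hfin : K.faces.Finite)

lemma isRelLowerSet_toFinset_faces :
    IsRelLowerSet (hfin.toFinset : Set (Finset (Euc N))) Finset.Nonempty := by
  simpa using K.isRelLowerSet_faces

lemma neg_one_pow_mul_asc (hcard : ∀ s ∈ K.faces, #s ≤ n + 1) (τ : Finset (Euc N)) :
    (-1) ^ (#τ - 1) * asc n K τ = ads (#τ - 1) * ((-1) ^ (#τ - 1) * defect n K τ) +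
      ∑ η ∈ hfin.toFinset with τ ⊂ η, ads (#τ - 1) / 2 * ((-1) ^ (#η - 1) * defect n K η) := by
  simp only [asc, finsum_mem_setOf_mem_and hfin, mul_sum, mul_add]
  rw [sum_Icc_sum_filter_card (by simpa using hcard)]
  congr 1
  · ring
  · refine sum_congr rfl fun η hη ↦ ?_
    have hτη := card_le_card (mem_filter.mp hη).2.subset
    have hdim := Nat.add_sub_of_le (Nat.sub_le_sub_right hτη 1)
    rw [← hdim, pow_add, Nat.add_sub_cancel_left]
    ring

theorem sum_neg_one_pow_mul_asc (hcard : ∀ s ∈ K.faces, #s ≤ n + 1) :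
    ∑ τ ∈ hfin.toFinset, (-1) ^ (#τ - 1) * asc n K τ =
      ∑ η ∈ hfin.toFinset, (-1) ^ (#η - 1) * defect n K η := by
  have hlower := isRelLowerSet_toFinset_faces hfin
  have hcoeff {η : Finset (Euc N)} (hη : η ∈ hfin.toFinset) :
      (ads (#η - 1) : ℝ) + ∑ τ ∈ hfin.toFinset with τ ⊂ η, (ads (#τ - 1) : ℝ) / 2 = 1 := by
    rw [filter_ssubset_eq_ssubsets_erase_empty hlower hη]
    simpa only [Rat.cast_add, Rat.cast_sum, Rat.cast_div, Rat.cast_ofNat, Rat.cast_one] using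
      congrArg (Rat.cast (K := ℝ)) (ads_add_sum_ssubsets (hlower.prop_of_mem hη))
  calc
    _ = ∑ τ ∈ hfin.toFinset, (ads (#τ - 1) * ((-1) ^ (#τ - 1) * defect n K τ) +
          ∑ η ∈ hfin.toFinset with τ ⊂ η,
            ads (#τ - 1) / 2 * ((-1) ^ (#η - 1) * defect n K η)) :=
      sum_congr rfl fun τ _ ↦ neg_one_pow_mul_asc hfin hcard τ
    _ = ∑ η ∈ hfin.toFinset, (ads (#η - 1) * ((-1) ^ (#η - 1) * defect n K η) +
          ∑ τ ∈ hfin.toFinset with τ ⊂ η,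
            ads (#τ - 1) / 2 * ((-1) ^ (#η - 1) * defect n K η)) := by
      simp only [sum_add_distrib, sum_filter]
      rw [sum_comm]
    _ = ∑ η ∈ hfin.toFinset, (-1) ^ (#η - 1) * defect n K η :=
      sum_congr rfl fun η hη ↦ by rw [← sum_mul, ← add_mul, hcoeff hη, one_mul]

theorem sum_neg_one_pow_mul_defect (hn : 1 ≤ n) :
    ∑ η ∈ hfin.toFinset, (-1) ^ (#η - 1) * defect n K η = stratEuler n K := by
  have hlower := isRelLowerSet_toFinset_faces hfin
  have hangles : ∑ η ∈ hfin.toFinset, ∑ σ ∈ hfin.toFinset with #σ = n + 1 ∧ η ⊆ σ,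
      (-1) ^ (#η - 1) * solidAngle η σ = 0 := by
    calc
      _ = ∑ σ ∈ hfin.toFinset with #σ = n + 1, ∑ η ∈ hfin.toFinset with η ⊆ σ,
            (-1) ^ (#η - 1) * solidAngle η σ :=
        sum_comm' (by simp only [mem_filter]; tauto)
      _ = 0 := sum_eq_zero fun σ hσ ↦ by
        obtain ⟨hσK, hσn⟩ := mem_filter.mp hσ
        rw [filter_subset_eq_powerset_erase_empty hlower hσK]
        exact sum_neg_one_pow_mul_solidAngle (K.indep (hfin.mem_toFinset.mp hσK)) (by lia)
  simp only [defect, nSimplicesOn, stratEuler, finsum_mem_setOf_mem_and hfin, mul_sub,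
    sum_sub_distrib, mul_sum, finsum_mem_eq_finite_toFinset_sum _ hfin]
  rw [hangles, sub_zero]
  exact sum_congr rfl fun η _ ↦ mul_comm _ _

end Complex

theorem gaussBonnet_asc_general {N n : ℕ} (hn : 1 ≤ n) (K : SimplicialComplex ℝ (Euc N))
    (hfin : K.faces.Finite) (hdim : IsNDim n K) :
    ∑ᶠ τ ∈ K.faces, (-1 : ℝ) ^ (τ.card - 1) * asc n K τ = stratEuler n K := by
  rw [finsum_mem_eq_finite_toFinset_sum _ hfin]
  exact (sum_neg_one_pow_mul_asc hfin hdim.1).trans (sum_neg_one_pow_mul_defect hfin hn)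

/-- Gauss-Bonnet for ascending stratified curvature: for a finite
`n`-dimensional simplicial complex `K` (with `n ≥ 2`),
`Σ_{τ ∈ K} (-1)^{dim τ} K_a(τ) = χˢ(K)`. -/
theorem gaussBonnet_asc {N n : ℕ} (hn : 2 ≤ n) (K : SimplicialComplex ℝ (Euc N))
    (hfin : K.faces.Finite) (hdim : IsNDim n K) :
    ∑ᶠ τ ∈ K.faces, (-1 : ℝ) ^ (τ.card - 1) * asc n K τ = stratEuler n K := by
  exact gaussBonnet_asc_general (one_le_two.trans hn) K hfin hdim

end AngleDefectPaper
end
end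

section
/- Let K be a finite n-dimensional simplicial complex embedded in Euclidean space, where n is an odd integer with n ≥ 3. Suppose that χ(link(η^i, K)) = 2 for every i-simplex η^i of K, for every even integer i with 0 ≤ i ≤ n−1 (here χ denotes the combinatorial Euler characteristic Σ_k (−1)^k f_k). Then the ascending stratified curvature K_a(τ) = 0 for every simplex τ of K. -/
open Filter MeasureTheory Geometry
open scoped BigOperators

noncomputable section

attribute [local instance 0] Classical.propDecidable

namespace AngleDefectPaper

variable {N : ℕ}

/-!
In odd codimension, inclusion–exclusion and the antipodal map make the solid angles in the
ascending curvature of `τ` cancel, which leaves the ranks of `τ` and of its proper cofaces.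

Every rank is one. Suppose a point of `|K|` has a neighborhood of cone type `r ≠ 2`. By Baire's
theorem the stratum of cone points in it contains a point `z` off the `(n - 2)`-skeleton. Since
links of `(n - 1)`-simplices have Euler characteristic `2`, two `n`-simplices are glued along each
of them, so `|K|` is locally `ℝⁿ` at `z`; invariance of domain, proved here from Brouwer's fixed
point theorem, then forces `r = 2`.

With all ranks equal to one, the alternating count of the proper cofaces of `τ` is minus the Euler
characteristic of the link, so the curvature of an even-dimensional `τ` is `a_p (1 - 2 / 2) = 0`.
If `dim τ` is odd then `a_p = 0`, because odd Bernoulli numbers vanish.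
-/

/-! ### Integrating the Jacobian of a map fixing the boundary -/

section Jacobian

open scoped NNReal Polynomial Topology

theorem isUnit_det_id_add {E : Type*} [NormedAddCommGroup E] [NormedSpace ℝ E] [CompleteSpace E]
    {A : E →L[ℝ] E} (hA : ‖A‖ < 1) : IsUnit (ContinuousLinearMap.id ℝ E + A).det := by
  have hunit : IsUnit (1 - -A) := isUnit_one_sub_of_norm_lt_one (by rwa [norm_neg])
  rw [sub_neg_eq_add] at hunit
  exact (hunit.map ContinuousLinearMap.toLinearMapRingHom).map LinearMap.det

theorem continuous_det_id_add {E : Type*} [NormedAddCommGroup E] [NormedSpace ℝ E]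
    [CompleteSpace E] {X : Type*} [TopologicalSpace X] {A : X → E →L[ℝ] E}
    (hA : Continuous A) : Continuous fun x => (ContinuousLinearMap.id ℝ E + A x).det :=
  ContinuousLinearMap.continuous_det.comp (continuous_const.add hA)

theorem det_id_add_pos {E : Type*} [NormedAddCommGroup E] [NormedSpace ℝ E] [CompleteSpace E]
    {A : E →L[ℝ] E} (hA : ‖A‖ < 1) :
    0 < (ContinuousLinearMap.id ℝ E + A).det := by
  set d : ℝ → ℝ := fun t => (ContinuousLinearMap.id ℝ E + t • A).det with hd
  have hcont : Continuous d := continuous_det_id_add (by fun_prop)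
  have hd0 : d 0 = 1 := by simp [hd, ContinuousLinearMap.det]
  have hne : ∀ t ∈ Set.Icc (0 : ℝ) 1, d t ≠ 0 := fun t ht => by
    refine (isUnit_det_id_add ?_).ne_zero
    rw [norm_smul, Real.norm_of_nonneg ht.1]
    exact (mul_le_of_le_one_left (norm_nonneg A) ht.2).trans_lt hA
  by_contra! hle
  have hd1 : d 1 ≤ 0 := by simpa only [hd, one_smul] using hle
  obtain ⟨t, ht, hdt⟩ := intermediate_value_Icc' zero_le_one hcont.continuousOn
    (show (0 : ℝ) ∈ Set.Icc (d 1) (d 0) from ⟨hd1, hd0 ▸ zero_le_one⟩)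
  exact hne t ht hdt

variable {E : Type*} [NormedAddCommGroup E] [NormedSpace ℝ E] [FiniteDimensional ℝ E]

theorem exists_polynomial_eval_eq_det (A : E →L[ℝ] E) :
    ∃ p : ℝ[X], p.natDegree ≤ Module.finrank ℝ E ∧
      ∀ t : ℝ, p.eval t = (ContinuousLinearMap.id ℝ E + t • A).det := by
  set b := Module.finBasis ℝ E
  set M := LinearMap.toMatrix b b (A : E →ₗ[ℝ] E)
  refine ⟨((Polynomial.X : ℝ[X]) • M.map Polynomial.C
    + (1 : Matrix _ _ ℝ).map Polynomial.C).det, ?_, fun t => ?_⟩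
  · simpa only [Fintype.card_fin] using Polynomial.natDegree_det_X_add_C_le M 1
  · have htoMatrix : LinearMap.toMatrix b b
        ((ContinuousLinearMap.id ℝ E + t • A : E →L[ℝ] E) : E →ₗ[ℝ] E) = t • M + 1 := by
      rw [ContinuousLinearMap.toLinearMap_add, ContinuousLinearMap.toLinearMap_smul, map_add,
        map_smul, ContinuousLinearMap.coe_id, LinearMap.toMatrix_id, add_comm]
    rw [ContinuousLinearMap.det, ← LinearMap.det_toMatrix b, htoMatrix,
      ← Polynomial.coe_evalRingHom, RingHom.map_det]
    congr 1
    ext i j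
    simp [Matrix.one_apply, apply_ite (Polynomial.eval t), mul_comm t]

theorem det_id_add_eq_sum_lagrange {v : ℕ → ℝ} (hv : Function.Injective v) (A : E →L[ℝ] E) :
    (ContinuousLinearMap.id ℝ E + A).det =
      ∑ k ∈ Finset.range (Module.finrank ℝ E + 1),
        (ContinuousLinearMap.id ℝ E + v k • A).det *
          (Lagrange.basis (Finset.range (Module.finrank ℝ E + 1)) v k).eval 1 := by
  obtain ⟨p, hdeg, heval⟩ := exists_polynomial_eval_eq_det A
  have hlt : p.degree < (Finset.range (Module.finrank ℝ E + 1)).card := by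
    rw [Finset.card_range]
    exact Polynomial.degree_le_natDegree.trans_lt (by exact_mod_cast Nat.lt_succ_of_le hdeg)
  have hinterp := congrArg (Polynomial.eval 1) (Lagrange.eq_interpolate hv.injOn hlt)
  simpa only [Lagrange.interpolate_apply, Polynomial.eval_finsetSum, Polynomial.eval_mul,
    Polynomial.eval_C, heval, one_smul] using hinterp

theorem exists_mem_segment_mem_frontier {E : Type*} [AddCommGroup E] [TopologicalSpace E]
    [IsTopologicalAddGroup E] [Module ℝ E] [ContinuousSMul ℝ E]
    {s : Set E} {x y : E} (hx : x ∈ s) (hy : y ∉ s) : ∃ z ∈ segment ℝ x y, z ∈ frontier s := by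
  have : PreconnectedSpace (segment ℝ x y) :=
    isPreconnected_iff_preconnectedSpace.1 (convex_segment x y).isPreconnected
  have hne : (Subtype.val ⁻¹' s : Set (segment ℝ x y)).Nonempty :=
    ⟨⟨x, left_mem_segment ℝ x y⟩, hx⟩
  have hne_univ : (Subtype.val ⁻¹' s : Set (segment ℝ x y)) ≠ Set.univ := fun h =>
    hy (h.ge (Set.mem_univ ⟨y, right_mem_segment ℝ x y⟩))
  obtain ⟨z, hz⟩ := nonempty_frontier_iff.2 ⟨hne, hne_univ⟩
  exact ⟨z, z.2, continuous_subtype_val.frontier_preimage_subset s hz⟩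

theorem lipschitzWith_indicator {E F : Type*} [NormedAddCommGroup E] [NormedSpace ℝ E]
    [NormedAddCommGroup F] {s : Set E} {g : E → F} {C : ℝ≥0} (hs : IsClosed s)
    (hg : LipschitzOnWith C g s) (h0 : ∀ x ∈ frontier s, g x = 0) :
    LipschitzWith C (s.indicator g) := by
  have hmixed : ∀ x ∈ s, ∀ y ∉ s, dist (g x) 0 ≤ C * dist x y := by
    intro x hx y hy
    obtain ⟨z, hz, hzs⟩ := exists_mem_segment_mem_frontier hx hy
    calc dist (g x) 0 = dist (g x) (g z) := by rw [h0 z hzs]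
      _ ≤ C * dist x z := hg.dist_le_mul x hx z (hs.frontier_subset hzs)
      _ ≤ C * dist x y := by
        gcongr
        exact (dist_add_dist_of_mem_segment hz).le.trans' (le_add_of_nonneg_right dist_nonneg)
  refine LipschitzWith.of_dist_le_mul fun x y => ?_
  by_cases hx : x ∈ s <;> by_cases hy : y ∈ s
  · simpa [hx, hy] using hg.dist_le_mul x hx y hy
  · simpa [hx, hy] using hmixed x hx y hy
  · simpa [hx, hy, dist_comm] using hmixed y hy x hx
  · simpa [hx, hy] using by positivity

theorem bijective_add_of_lipschitzWith {E : Type*} [NormedAddCommGroup E] [NormedSpace ℝ E]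
    [CompleteSpace E] {G : E → E} {c : ℝ≥0} (hG : LipschitzWith c G) (hc : c < 1) :
    Function.Bijective fun x => x + G x := by
  have hlin : ApproximatesLinearOn (fun x => x + G x)
      ((ContinuousLinearEquiv.refl ℝ E : E ≃L[ℝ] E) : E →L[ℝ] E) Set.univ c := by
    rw [ApproximatesLinearOn.approximatesLinearOn_iff_lipschitzOnWith, lipschitzOnWith_univ]
    convert hG using 1
    ext x
    simp
  have hc' : Subsingleton E ∨
      c < ‖((ContinuousLinearEquiv.refl ℝ E).symm : E →L[ℝ] E)‖₊⁻¹ := by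
    rcases subsingleton_or_nontrivial E with hE | hE
    · exact Or.inl hE
    · right
      simpa using hc
  exact ⟨Set.injOn_univ.1 (hlin.injOn hc'), hlin.surjective hc'⟩

theorem bijOn_add_of_eq_zero_on_frontier {s : Set E} {g : E → E} {c : ℝ≥0} (hs : IsClosed s)
    (hg : LipschitzOnWith c g s) (h0 : ∀ x ∈ frontier s, g x = 0) (hc : c < 1) :
    Set.BijOn (fun x => x + g x) s s := by
  have : CompleteSpace E := FiniteDimensional.complete ℝ E
  have hbij := bijective_add_of_lipschitzWith (lipschitzWith_indicator hs hg h0) hc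
  have himage : (fun x => x + s.indicator g x) '' sᶜ = sᶜ := by
    rw [Set.image_congr fun x hx => by rw [Set.indicator_of_notMem hx, add_zero], Set.image_id']
  rw [Set.image_compl_eq hbij, compl_inj_iff] at himage
  refine Set.BijOn.congr (f₁ := fun x => x + s.indicator g x) ?_ fun x hx => by
    simp only [Set.indicator_of_mem hx]
  exact ⟨(Set.mapsTo_image _ s).mono_right himage.le, hbij.injective.injOn, himage.ge⟩

theorem setIntegral_det_id_add_eq {X : Type*} [TopologicalSpace X] [T2Space X] [MeasurableSpace X]
    [OpensMeasurableSpace X] {ν : Measure X} [IsFiniteMeasureOnCompacts ν] {s : Set X} {I : ℝ}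
    {A : X → E →L[ℝ] E} {v : ℕ → ℝ} (hs : IsCompact s) (hA : Continuous A)
    (hv : Function.Injective v)
    (hI : ∀ k, ∫ x in s, (ContinuousLinearMap.id ℝ E + v k • A x).det ∂ν = I) :
    ∫ x in s, (ContinuousLinearMap.id ℝ E + A x).det ∂ν = I := by
  have : CompleteSpace E := FiniteDimensional.complete ℝ E
  have hcont (k : ℕ) : Continuous fun x => (ContinuousLinearMap.id ℝ E + v k • A x).det :=
    continuous_det_id_add (A := fun x => v k • A x) (hA.const_smul (v k))
  have hint (k : ℕ) (c : ℝ) : IntegrableOn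
      (fun x => (ContinuousLinearMap.id ℝ E + v k • A x).det * c) s ν :=
    ((hcont k).continuousOn.integrableOn_compact hs).mul_const c
  rw [funext fun x => det_id_add_eq_sum_lagrange hv (A x), integral_finsetSum _ fun k _ => hint k _]
  simp_rw [integral_mul_const, hI]
  rw [← Finset.mul_sum, ← Polynomial.eval_finsetSum,
    Lagrange.sum_basis hv.injOn Finset.nonempty_range_add_one, Polynomial.eval_one, mul_one]

variable [MeasurableSpace E] [BorelSpace E] (μ : Measure E) [μ.IsAddHaarMeasure]

theorem setIntegral_det_id_add_fderiv_of_lt_one {s : Set E} {g : E → E} {c : ℝ≥0}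
    (hs : IsClosed s) (hg : ContDiff ℝ 1 g) (h0 : ∀ x ∈ frontier s, g x = 0)
    (hlip : LipschitzOnWith c g s) (hbound : ∀ x ∈ s, ‖fderiv ℝ g x‖ ≤ c) (hc : c < 1) :
    ∫ x in s, (ContinuousLinearMap.id ℝ E + fderiv ℝ g x).det ∂μ = μ.real s := by
  have hbij := bijOn_add_of_eq_zero_on_frontier hs hlip h0 hc
  have hpos : ∀ x ∈ s, 0 < (ContinuousLinearMap.id ℝ E + fderiv ℝ g x).det := fun x hx =>
    det_id_add_pos ((hbound x hx).trans_lt (by exact_mod_cast hc))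
  calc ∫ x in s, (ContinuousLinearMap.id ℝ E + fderiv ℝ g x).det ∂μ
      = ∫ x in s, |(ContinuousLinearMap.id ℝ E + fderiv ℝ g x).det| • (1 : ℝ) ∂μ :=
        setIntegral_congr_fun hs.measurableSet fun x hx => by
          simp only [abs_of_pos (hpos x hx), smul_eq_mul, mul_one]
    _ = ∫ _ in (fun x => x + g x) '' s, (1 : ℝ) ∂μ :=
        (integral_image_eq_integral_abs_det_fderiv_smul μ hs.measurableSet
          (fun x _ => ((hasFDerivAt_id x).add
            (hg.differentiable one_ne_zero x).hasFDerivAt).hasFDerivWithinAt)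
          hbij.injOn fun _ => 1).symm
    _ = μ.real s := by rw [hbij.image_eq, setIntegral_const, smul_eq_mul, mul_one]

theorem exists_injective_mul_lt_one (L : ℝ≥0) :
    ∃ v : ℕ → ℝ≥0, Function.Injective v ∧ ∀ k, v k * L < 1 := by
  refine ⟨fun k => (L + 1 + k)⁻¹, fun a b hab => ?_, fun k => ?_⟩
  · simpa using hab
  · rw [inv_mul_lt_iff₀ (by positivity), mul_one, add_assoc]
    exact lt_add_of_pos_right L (by positivity)

theorem setIntegral_det_id_add_smul_fderiv {s : Set E} {g : E → E} {L t : ℝ≥0} (hs : IsClosed s)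
    (hconv : Convex ℝ s) (hg : ContDiff ℝ 1 g) (h0 : ∀ x ∈ frontier s, g x = 0)
    (hL : ∀ x ∈ s, ‖fderiv ℝ g x‖₊ ≤ L) (ht : t * L < 1) :
    ∫ x in s, (ContinuousLinearMap.id ℝ E + (t : ℝ) • fderiv ℝ g x).det ∂μ = μ.real s := by
  have hdiff : Differentiable ℝ g := hg.differentiable one_ne_zero
  have hfderiv (x : E) : fderiv ℝ (fun y => (t : ℝ) • g y) x = (t : ℝ) • fderiv ℝ g x :=
    fderiv_fun_const_smul (hdiff x) _
  have hbound : ∀ x ∈ s, ‖fderiv ℝ (fun y => (t : ℝ) • g y) x‖₊ ≤ t * L := fun x hx => by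
    rw [hfderiv, nnnorm_smul, NNReal.nnnorm_eq]
    gcongr
    exact hL x hx
  simp_rw [← hfderiv]
  exact setIntegral_det_id_add_fderiv_of_lt_one μ hs (hg.const_smul (t : ℝ))
    (fun x hx => by rw [h0 x hx, smul_zero])
    (hconv.lipschitzOnWith_of_nnnorm_fderiv_le
      (fun x _ => (hdiff x).const_smul (t : ℝ)) hbound) hbound ht

-- `det (id + t • Dg)` is a polynomial in `t`, so its integral, constant for small `t`, is constant.
theorem setIntegral_det_id_add_fderiv {s : Set E} {g : E → E} (hs : IsCompact s)
    (hconv : Convex ℝ s) (hg : ContDiff ℝ 1 g) (h0 : ∀ x ∈ frontier s, g x = 0) :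
    ∫ x in s, (ContinuousLinearMap.id ℝ E + fderiv ℝ g x).det ∂μ = μ.real s := by
  have hg' : Continuous (fderiv ℝ g) := hg.continuous_fderiv one_ne_zero
  obtain ⟨L₀, hL₀⟩ := hs.exists_bound_of_continuousOn hg'.continuousOn
  have hL : ∀ x ∈ s, ‖fderiv ℝ g x‖₊ ≤ L₀.toNNReal := fun x hx => by
    rw [← NNReal.coe_le_coe, coe_nnnorm]
    exact (hL₀ x hx).trans (Real.le_coe_toNNReal L₀)
  obtain ⟨v, hv, hvL⟩ := exists_injective_mul_lt_one L₀.toNNReal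
  exact setIntegral_det_id_add_eq hs hg' (NNReal.coe_injective.comp hv) fun k =>
    setIntegral_det_id_add_smul_fderiv μ hs.isClosed hconv hg h0 hL (hvL k)

end Jacobian

/-! ### Brouwer's fixed point theorem -/

section Brouwer

open Metric

variable {E : Type*} [NormedAddCommGroup E] [InnerProductSpace ℝ E] [FiniteDimensional ℝ E]

theorem det_eq_zero_of_norm_eq {r : E → E} {r' : E →L[ℝ] E} {x : E} {R : ℝ}
    (hr : HasFDerivAt r r' x) (hR : R ≠ 0) (hnorm : ∀ y, ‖r y‖ = R) : r'.det = 0 := by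
  -- Differentiating `⟪r, r⟫ = R ^ 2` shows that `r x` is orthogonal to the range of `r'`.
  have horth (w : E) : inner ℝ (r x) (r' w) = 0 := by
    have hconst : (fun y => inner ℝ (r y) (r y)) = fun _ => R ^ 2 :=
      funext fun y => by rw [real_inner_self_eq_norm_sq, hnorm]
    have hinner := hr.inner ℝ hr
    rw [hconst] at hinner
    have hzero := DFunLike.congr_fun (hinner.unique (hasFDerivAt_const _ _)) w
    simp only [ContinuousLinearMap.comp_apply, ContinuousLinearMap.prod_apply,
      fderivInnerCLM_apply, zero_apply, real_inner_comm (r x)] at hzero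
    linarith
  by_contra hdet
  obtain ⟨w, hw⟩ := (LinearMap.equivOfDetNeZero (r' : E →ₗ[ℝ] E) hdet).surjective (r x)
  have hself : inner ℝ (r x) (r x) = 0 := by
    nth_rw 2 [← hw]
    exact horth w
  rw [inner_self_eq_zero] at hself
  exact hR (by rw [← hnorm x, hself, norm_zero])

theorem exists_norm_ne_of_contDiff {r : E → E} {R : ℝ} (hR : 0 < R) (hr : ContDiff ℝ 1 r)
    (hid : ∀ x, ‖x‖ = R → r x = x) : ∃ x, ‖r x‖ ≠ R := by
  by_contra! hnorm
  borelize E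
  have hrd (x : E) : HasFDerivAt r (fderiv ℝ r x) x :=
    (hr.differentiable one_ne_zero x).hasFDerivAt
  have hvol := setIntegral_det_id_add_fderiv (volume : Measure E) (s := closedBall 0 R)
    (g := fun x => r x - x) (isCompact_closedBall _ _) (convex_closedBall _ _)
    (hr.sub contDiff_id) fun x hx => by
      rw [hid x (by simpa using frontier_closedBall_subset_sphere hx), sub_self]
  have hfderiv (x : E) : ContinuousLinearMap.id ℝ E + fderiv ℝ (fun x => r x - x) x =
      fderiv ℝ r x := by
    rw [fderiv_fun_sub (hrd x).differentiableAt differentiableAt_fun_id, fderiv_fun_id]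
    exact add_sub_cancel _ _
  simp_rw [hfderiv, det_eq_zero_of_norm_eq (hrd _) hR.ne' hnorm, integral_zero] at hvol
  exact (ENNReal.toReal_pos (measure_closedBall_pos volume 0 hR).ne'
    (isCompact_closedBall _ _).measure_lt_top.ne).ne hvol

theorem exists_eq_zero_of_eq_id_of_le_norm {q : E → E} {R : ℝ} (hq : Continuous q)
    (hid : ∀ x, R ≤ ‖x‖ → q x = x) : ∃ x, q x = 0 := by
  by_contra! hne
  set R' : ℝ := max (R + 1) 1
  have hR' : 0 < R' := zero_lt_one.trans_le (le_max_right _ _)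
  have hRR' : R < R' := (lt_add_one R).trans_le (le_max_left _ _)
  have hopen : IsOpen {x : E | R < ‖x‖} := isOpen_lt continuous_const continuous_norm
  obtain ⟨q', hq', hdist, heqOn, -⟩ := hq.exists_contDiff_approx_and_eqOn 1
    (ε := fun x => ‖q x‖) hq.norm (fun x => norm_pos_iff.2 (hne x))
    (S := {x : E | R' ≤ ‖x‖}) (isClosed_le continuous_const continuous_norm)
    (hopen.mem_nhdsSet.2 fun x hx => hRR'.trans_le hx)
    (contDiffOn_id.congr fun x hx => hid x (le_of_lt hx))
  have hne' (x : E) : q' x ≠ 0 := fun h0 => by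
    simpa [h0] using hdist x
  obtain ⟨x, hx⟩ := exists_norm_ne_of_contDiff hR' (r := fun x => (R' / ‖q' x‖) • q' x)
    ((contDiff_const.div (hq'.norm ℝ hne') fun x => norm_ne_zero_iff.2 (hne' x)).smul hq')
    fun x hx => by
      have hfix : q' x = x := by rw [heqOn hx.ge, hid x (hx ▸ hRR'.le)]
      simp only [hfix, hx, div_self hR'.ne', one_smul]
  refine hx ?_
  rw [norm_smul, norm_div, norm_norm, Real.norm_of_nonneg hR'.le,
    div_mul_cancel₀ _ (norm_ne_zero_iff.2 (hne' x))]

theorem exists_fixedPoint_closedBall {f : E → E} (hf : ContinuousOn f (closedBall 0 1))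
    (hmaps : Set.MapsTo f (closedBall 0 1) (closedBall 0 1)) :
    ∃ x ∈ closedBall (0 : E) 1, f x = x := by
  set P : E → E := fun x => (max 1 ‖x‖)⁻¹ • x with hP
  have hmax (x : E) : 0 < max 1 ‖x‖ := zero_lt_one.trans_le (le_max_left _ _)
  have hPc : Continuous P :=
    (Continuous.inv₀ (by fun_prop) fun x => (hmax x).ne').smul continuous_id
  have hPmem (x : E) : P x ∈ closedBall (0 : E) 1 := by
    rw [mem_closedBall_zero_iff, norm_smul, norm_inv, Real.norm_of_nonneg (hmax x).le,
      inv_mul_le_iff₀ (hmax x), mul_one]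
    exact le_max_right _ _
  set c : E → ℝ := fun x => max 0 (min 1 (2 - ‖x‖)) with hc
  have hc0 (x : E) : 0 ≤ c x := le_max_left _ _
  have hc1 (x : E) : c x ≤ 1 := max_le zero_le_one (min_le_left _ _)
  obtain ⟨x, hx⟩ := exists_eq_zero_of_eq_id_of_le_norm (R := 2)
    (q := fun x => x - c x • f (P x))
    (continuous_id.sub ((by fun_prop : Continuous c).smul (hf.comp_continuous hPc hPmem)))
    fun x hx => by
      have hcx : c x = 0 := max_eq_left ((min_le_right _ _).trans (by linarith))
      rw [hcx, zero_smul, sub_zero]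
  rw [sub_eq_zero] at hx
  have hfP : ‖f (P x)‖ ≤ 1 := mem_closedBall_zero_iff.1 (hmaps (hPmem x))
  have hnorm : ‖x‖ ≤ 1 := by
    rw [hx, norm_smul, Real.norm_of_nonneg (hc0 x)]
    exact mul_le_one₀ (hc1 x) (norm_nonneg _) hfP
  have hPx : P x = x := by simp only [hP, max_eq_left hnorm, inv_one, one_smul]
  have hcx : c x = 1 := by
    simp only [hc]
    rw [min_eq_left (by linarith), max_eq_right zero_le_one]
  exact ⟨x, mem_closedBall_zero_iff.2 hnorm, by rw [hPx, hcx, one_smul] at hx; exact hx.symm⟩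

end Brouwer

/-! ### Invariance of domain -/

section InvarianceOfDomain

open Metric
open scoped Topology

theorem exists_continuousMap_leftInvOn {X E : Type*} [TopologicalSpace X] [T4Space X]
    [NormedAddCommGroup E] [NormedSpace ℝ E] [FiniteDimensional ℝ E] {f : E → X} {s : Set E}
    (hs : IsCompact s) (hf : ContinuousOn f s) (hinj : Set.InjOn f s) :
    ∃ G : C(X, E), Set.LeftInvOn G f s := by
  have : CompactSpace s := isCompact_iff_compactSpace.1 hs
  have : TietzeExtension.{_, _} E := TietzeExtension.of_tvs ℝ
  obtain ⟨G, hG⟩ := ContinuousMap.exists_extension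
    ((continuousOn_iff_continuous_domRestrict.1 hf).isClosedEmbedding
      (Set.injOn_iff_injective.1 hinj))
    ⟨Subtype.val, continuous_subtype_val⟩
  exact ⟨G, fun x hx => DFunLike.congr_fun hG ⟨x, hx⟩⟩

theorem exists_continuousOn_compl_singleton_dist_eq {E : Type*} [NormedAddCommGroup E]
    [NormedSpace ℝ E] (c : E) {ε : ℝ} (hε : 0 < ε) :
    ∃ Φ : E → E, ContinuousOn Φ {c}ᶜ ∧ (∀ y, ε ≤ dist y c → Φ y = y) ∧
      ∀ y ≠ c, dist y c ≤ ε → dist (Φ y) c = ε := by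
  refine ⟨fun y => c + max 1 (ε / dist y c) • (y - c), ?_, fun y hy => ?_, fun y hne hy => ?_⟩
  · have hdiv : ContinuousOn (fun y => ε / dist y c) {c}ᶜ :=
      continuousOn_const.div (by fun_prop) fun y hy => dist_ne_zero.2 hy
    exact continuousOn_const.add
      ((continuousOn_const.sup hdiv).smul (continuousOn_id.sub continuousOn_const))
  · simp only
    rw [max_eq_left ((div_le_one (hε.trans_le hy)).2 hy), one_smul, add_sub_cancel]
  · have hpos : 0 < dist y c := dist_pos.2 hne
    simp only
    rw [max_eq_right ((one_le_div hpos).2 hy), dist_self_add_left, norm_smul, norm_div,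
      Real.norm_of_nonneg hε.le, Real.norm_of_nonneg hpos.le, ← dist_eq_norm,
      div_mul_cancel₀ _ hpos.ne']

theorem exists_continuous_dist_lt_forall_ne_zero {E : Type*} [NormedAddCommGroup E]
    [NormedSpace ℝ E] [FiniteDimensional ℝ E] [MeasurableSpace E] [BorelSpace E] (μ : Measure E)
    [μ.IsAddHaarMeasure] {G : E → E} {K S : Set E} {δ : ℝ} (hG : Continuous G)
    (hK : IsCompact K) (hGK : ∀ y ∈ K, G y ≠ 0) (hS : μ S = 0) (hδ : 0 < δ) :
    ∃ P : E → E, Continuous P ∧ (∀ y, dist (P y) (G y) < δ) ∧ ∀ y ∈ K ∪ S, P y ≠ 0 := by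
  obtain ⟨δ', hδ', hδδ', hδK⟩ : ∃ δ' > 0, δ' ≤ δ ∧ ∀ y ∈ K, δ' ≤ ‖G y‖ := by
    obtain ⟨m, hm, hmK⟩ := hK.exists_forall_le' hG.norm.continuousOn
      fun y hy => norm_pos_iff.2 (hGK y hy)
    exact ⟨min δ m, lt_min hδ hm, min_le_left _ _, fun y hy => (min_le_right _ _).trans (hmK y hy)⟩
  obtain ⟨P, hP, hPG, -⟩ := hG.exists_contDiff_approx 1 (ε := fun _ => δ' / 2)
    continuous_const fun _ => half_pos hδ'
  -- The `C¹` map `P` sends the null set `S` to a null set, so it misses some small vector `w`.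
  obtain ⟨w, hwS, hw⟩ : ∃ w ∈ ball (0 : E) (δ' / 2), w ∉ P '' S := by
    by_contra! hsub
    have hnull : μ (P '' S) = 0 := addHaar_image_eq_zero_of_differentiableOn_of_addHaar_eq_zero
      μ (hP.differentiable one_ne_zero).differentiableOn hS
    exact (measure_ball_pos μ 0 (half_pos hδ')).ne' (measure_mono_null hsub hnull)
  have hdist (y : E) : dist (P y - w) (G y) < δ' := by
    calc dist (P y - w) (G y) ≤ dist (P y - w) (P y) + dist (P y) (G y) := dist_triangle _ _ _
      _ < δ' / 2 + δ' / 2 := by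
        refine add_lt_add ?_ (hPG y)
        rwa [dist_eq_norm, sub_sub_cancel_left, norm_neg, ← mem_ball_zero_iff]
      _ = δ' := add_halves δ'
  refine ⟨fun y => P y - w, hP.continuous.sub continuous_const,
    fun y => (hdist y).trans_le hδδ', ?_⟩
  rintro y (hy | hy) h0
  · have hlt : dist 0 (G y) < δ' := h0 ▸ hdist y
    rw [dist_zero_left] at hlt
    exact (hδK y hy).not_gt hlt
  · exact hw ⟨y, hy, sub_eq_zero.1 h0⟩

variable {E F : Type*}

theorem exists_mem_closedBall_eq_zero [NormedAddCommGroup E] [InnerProductSpace ℝ E]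
    [FiniteDimensional ℝ E] {H : E → E} (hH : ContinuousOn H (closedBall 0 1))
    (hdist : ∀ x ∈ closedBall (0 : E) 1, dist x (H x) ≤ 1) :
    ∃ x ∈ closedBall (0 : E) 1, H x = 0 := by
  obtain ⟨x, hx, hfix⟩ := exists_fixedPoint_closedBall (f := fun x => x - H x)
    (continuousOn_id.sub hH) fun x hx => by
      rw [mem_closedBall_zero_iff, ← dist_eq_norm]
      exact hdist x hx
  exact ⟨x, hx, sub_eq_self.1 hfix⟩

-- If `f '' closedBall 0 1` missed a point `c` near `f 0`, the left inverse `G`, composed with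
-- pushing the image away from `c` and perturbed so as to have no zero on the pushed image, would
-- contradict `exists_mem_closedBall_eq_zero`.
theorem ball_subset_image_closedBall [NormedAddCommGroup E] [InnerProductSpace ℝ E]
    [FiniteDimensional ℝ E] {f G : E → E} {ε : ℝ} (hf : ContinuousOn f (closedBall 0 1))
    (hG : Continuous G) (hGf : Set.LeftInvOn G f (closedBall 0 1)) (hε : 0 < ε)
    (hGε : ∀ y ∈ ball (f 0) (ε + ε), ‖G y‖ < 1 / 4) : ball (f 0) ε ⊆ f '' closedBall 0 1 := by
  borelize E
  intro c hcε
  by_contra hc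
  have hfc : ∀ x ∈ closedBall (0 : E) 1, f x ≠ c := fun x hx h => hc ⟨x, hx, h⟩
  obtain ⟨Φ, hΦ, hΦfar, hΦnear⟩ := exists_continuousOn_compl_singleton_dist_eq c hε
  obtain ⟨P, hP, hPG, hPne⟩ := exists_continuous_dist_lt_forall_ne_zero volume
    (K := f '' closedBall 0 1 ∩ {y | ε ≤ dist y c}) (S := sphere c ε) hG
    (((isCompact_closedBall 0 1).image_of_continuousOn hf).inter_right
      (isClosed_le (by fun_prop) (by fun_prop)))
    (by
      rintro _ ⟨⟨x, hx, rfl⟩, hfar⟩ hzero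
      rw [hGf hx] at hzero
      rw [Set.mem_ofPred_eq, hzero, dist_comm] at hfar
      exact hfar.not_gt hcε)
    (Measure.addHaar_sphere_of_ne_zero volume c hε.ne') (by norm_num : (0 : ℝ) < 1 / 4)
  have hnear (x : E) (hx : x ∈ closedBall 0 1) : dist x (G (Φ (f x))) ≤ 1 / 2 := by
    rcases le_total ε (dist (f x) c) with hfar | hclose
    · rw [hΦfar _ hfar, hGf hx, dist_self]
      norm_num
    · have hsmall (y : E) (hy : dist y c ≤ ε) : ‖G y‖ < 1 / 4 :=
        hGε y ((dist_triangle _ _ _).trans_lt (add_lt_add_of_le_of_lt hy hcε))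
      calc dist x (G (Φ (f x))) = ‖G (f x) - G (Φ (f x))‖ := by rw [hGf hx, dist_eq_norm]
        _ ≤ ‖G (f x)‖ + ‖G (Φ (f x))‖ := norm_sub_le _ _
        _ ≤ 1 / 4 + 1 / 4 :=
          add_le_add (hsmall _ hclose).le (hsmall _ (hΦnear _ (hfc x hx) hclose).le).le
        _ = 1 / 2 := by norm_num
  obtain ⟨x, hx, hzero⟩ := exists_mem_closedBall_eq_zero (H := fun x => P (Φ (f x)))
    (hP.comp_continuousOn (hΦ.comp hf hfc))
    fun x hx => (dist_triangle_right x _ (G (Φ (f x)))).trans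
      (by linarith [hnear x hx, hPG (Φ (f x))])
  refine hPne (Φ (f x)) ?_ hzero
  rcases le_total ε (dist (f x) c) with hfar | hclose
  · rw [hΦfar _ hfar]
    exact Or.inl ⟨⟨x, hx, rfl⟩, hfar⟩
  · exact Or.inr (hΦnear _ (hfc x hx) hclose)

theorem image_closedBall_mem_nhds [NormedAddCommGroup E] [InnerProductSpace ℝ E]
    [FiniteDimensional ℝ E] {f : E → E} (hf : ContinuousOn f (closedBall 0 1))
    (hinj : Set.InjOn f (closedBall 0 1)) : f '' closedBall 0 1 ∈ 𝓝 (f 0) := by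
  obtain ⟨G, hG⟩ := exists_continuousMap_leftInvOn (isCompact_closedBall 0 1) hf hinj
  have hG0 : G (f 0) = 0 := hG (mem_closedBall_self zero_le_one)
  obtain ⟨ε, hε, hGε⟩ := Metric.continuousAt_iff.1 (G.continuous.continuousAt (x := f 0))
    (1 / 4) (by norm_num)
  simp only [hG0, dist_zero_right] at hGε
  exact mem_of_superset (ball_mem_nhds _ (half_pos hε)) (ball_subset_image_closedBall hf
    G.continuous hG (half_pos hε) fun y hy => hGε (by rwa [add_halves] at hy))

variable [NormedAddCommGroup E] [NormedSpace ℝ E] [FiniteDimensional ℝ E]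
  [NormedAddCommGroup F] [NormedSpace ℝ F] [FiniteDimensional ℝ F]

theorem image_mem_nhds_of_continuousOn_injOn (hEF : Module.finrank ℝ E = Module.finrank ℝ F)
    {f : E → F} {x : E} {V : Set E} (hV : V ∈ 𝓝 x) (hf : ContinuousOn f V)
    (hinj : Set.InjOn f V) : f '' V ∈ 𝓝 (f x) := by
  set W := EuclideanSpace ℝ (Fin (Module.finrank ℝ E))
  have e : W ≃L[ℝ] E := ContinuousLinearEquiv.ofFinrankEq (by simp [W])
  have e' : F ≃L[ℝ] W := ContinuousLinearEquiv.ofFinrankEq (by simp [W, hEF])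
  set T : W → E := fun u => x + e u
  have hT : Continuous T := by fun_prop
  have hVT : T ⁻¹' V ∈ 𝓝 (0 : W) := hT.continuousAt.preimage_mem_nhds (by simpa [T] using hV)
  obtain ⟨δ, hδ, hδV⟩ := nhds_basis_closedBall.mem_iff.1 hVT
  have hmaps : Set.MapsTo (fun u : W => T (δ • u)) (closedBall 0 1) V := fun u hu => hδV (by
    rw [mem_closedBall_zero_iff] at hu ⊢
    rw [norm_smul, Real.norm_of_nonneg hδ.le]
    exact mul_le_of_le_one_right hδ.le hu)
  have himage := image_closedBall_mem_nhds (f := fun u : W => e' (f (T (δ • u))))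
    (e'.continuous.comp_continuousOn (hf.comp (by fun_prop) hmaps))
    fun u hu v hv huv => by
      have hTuv : T (δ • u) = T (δ • v) := hinj (hmaps hu) (hmaps hv) (e'.injective huv)
      exact smul_right_injective _ hδ.ne' (e.injective (add_left_cancel hTuv))
  have hpre := e'.continuous.continuousAt.preimage_mem_nhds (x := f x)
    (by simpa only [T, smul_zero, map_zero, add_zero] using himage)
  refine mem_of_superset hpre ?_
  rintro y ⟨u, hu, huy⟩
  exact ⟨_, hmaps hu, e'.injective huy⟩

theorem finrank_le_of_continuousOn_injOn {f : E → F} {x : E} {V : Set E} (hV : V ∈ 𝓝 x)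
    (hf : ContinuousOn f V) (hinj : Set.InjOn f V) :
    Module.finrank ℝ E ≤ Module.finrank ℝ F := by
  by_contra! hlt
  obtain ⟨L, hL⟩ : ∃ L : F →ₗ[ℝ] E, Function.Injective L :=
    finrank_le_iff_exists_linearMap.1 hlt.le
  have hrange : LinearMap.range L ≠ ⊤ := fun htop =>
    hlt.ne (LinearMap.finrank_range_of_inj hL ▸ htop ▸ finrank_top ℝ E)
  have hLc : Continuous L := L.continuous_of_finiteDimensional
  have hnhds := image_mem_nhds_of_continuousOn_injOn rfl hV (f := fun y => L (f y))
    (hLc.comp_continuousOn hf) (hL.comp_injOn hinj)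
  refine hrange (Submodule.eq_top_of_nonempty_interior' _ ⟨L (f x), ?_⟩)
  rw [mem_interior_iff_mem_nhds]
  exact mem_of_superset hnhds (by rintro _ ⟨y, -, rfl⟩; exact LinearMap.mem_range_self L _)

end InvarianceOfDomain

/-! ### Cone neighborhoods -/

section ConeNeighborhood

open Topology

theorem exists_continuousOn_injOn_extension {X Y : Type*} [TopologicalSpace X]
    [TopologicalSpace Y] [Nonempty Y] {s : Set X} {f : s → Y} (hf : Continuous f)
    (hinj : Function.Injective f) :
    ∃ k : X → Y, ContinuousOn k s ∧ Set.InjOn k s ∧ ∀ x : s, k x = f x := by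
  have hk : ∀ x : s, Function.extend Subtype.val f (fun _ => Classical.arbitrary Y) x = f x :=
    Subtype.val_injective.extend_apply _ _
  refine ⟨_, ?_, ?_, hk⟩
  · rw [continuousOn_iff_continuous_domRestrict]
    exact hf.congr fun x => (hk x).symm
  · rw [Set.injOn_iff_injective]
    exact fun x y hxy => hinj (by simpa only [Set.domRestrict_apply, hk] using hxy)

theorem zero_mem_Tcone (r : ℕ) : (0 : ℝ × ℝ) ∈ Tcone r := Or.inl rfl

theorem mk_mul_mem_Tcone {r k : ℕ} (hk : k < r) {t : ℝ} (ht0 : 0 ≤ t) (ht1 : t < 1) :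
    (t, t * k) ∈ Tcone r :=
  Or.inr <| Set.mem_biUnion (Finset.mem_coe.2 (Finset.mem_range.2 hk)) ⟨t, ht0, ht1, by simp⟩

theorem fst_nonneg_and_snd_eq_zero_of_mem_Tcone {r : ℕ} (hr : r ≤ 1) {p : ℝ × ℝ}
    (hp : p ∈ Tcone r) : 0 ≤ p.1 ∧ p.2 = 0 := by
  rcases hp with rfl | hp
  · simp
  · simp only [Set.mem_iUnion, Finset.mem_range] at hp
    obtain ⟨k, hk, t, ht0, -, rfl⟩ := hp
    obtain rfl : k = 0 := by omega
    simpa using ht0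

/-- The line bent along the first two rays of `Tcone r`: a nonnegative `t` goes to the ray
`k = 0`, a negative one to the ray `k = 1`. -/
def bentLine (t : ℝ) : ℝ × ℝ := (|t|, max (-t) 0)

theorem bentLine_zero : bentLine 0 = 0 := by simp [bentLine]

theorem continuous_bentLine : Continuous bentLine := by
  unfold bentLine
  fun_prop

theorem bentLine_injective : Function.Injective bentLine := by
  intro a b hab
  simp only [bentLine, Prod.mk.injEq] at hab
  grind

theorem bentLine_mem_Tcone {r : ℕ} (hr : 2 ≤ r) {t : ℝ} (ht : |t| < 1) :
    bentLine t ∈ Tcone r := by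
  rcases le_total 0 t with h0 | h0
  · simpa [bentLine, h0] using mk_mul_mem_Tcone (k := 0) (by omega : 0 < r) (abs_nonneg t) ht
  · simpa [bentLine, h0, abs_of_nonpos] using
      mk_mul_mem_Tcone (k := 1) (by omega : 1 < r) (abs_nonneg t) ht

variable {n r : ℕ} {S : Set (Euc N)} {z : Euc N}

theorem HasConeNbhd.exists_parametrization (hcone : HasConeNbhd n r S z) (hz : z ∈ S) :
    ∃ (I : (ℝ × ℝ) × Euc (n - 1) → Euc N) (y : Euc (n - 1)),
      ContinuousOn I (Tcone r ×ˢ Set.univ) ∧ Set.InjOn I (Tcone r ×ˢ Set.univ) ∧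
      Set.MapsTo I (Tcone r ×ˢ Set.univ) S ∧ I (0, y) = z ∧
      ∀ᶠ w in 𝓝 y, HasConeNbhd n r S (I (0, w)) := by
  obtain ⟨U, hU, hUS, h, hh⟩ := hcone
  obtain ⟨I, hIc, hIinj, hI⟩ := exists_continuousOn_injOn_extension
    (s := Tcone r ×ˢ (Set.univ : Set (Euc (n - 1))))
    (f := fun p => (h.symm (⟨p.1.1, p.2.1⟩, p.1.2) : Euc N)) (by fun_prop)
    (fun p q hpq => by
      have := h.symm.injective (Subtype.ext hpq)
      simp only [Prod.mk.injEq, Subtype.mk.injEq] at this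
      exact Subtype.ext (Prod.ext this.1 this.2))
  have hI' : ∀ p (hp : p ∈ Tcone r ×ˢ Set.univ), I p = h.symm (⟨p.1, hp.1⟩, p.2) :=
    fun p hp => hI ⟨p, hp⟩
  have hIU : Set.MapsTo I (Tcone r ×ˢ Set.univ) U := fun p hp => by
    rw [hI' p hp]
    exact Subtype.coe_prop _
  have hapex : ∀ w : Euc (n - 1), ((0, w) : (ℝ × ℝ) × Euc (n - 1)) ∈ Tcone r ×ˢ Set.univ :=
    fun w => ⟨zero_mem_Tcone r, trivial⟩
  have hzU : z ∈ U := mem_of_mem_nhdsWithin hz hU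
  have hIz : I (0, (h ⟨z, hzU⟩).2) = z := by
    have : ((⟨0, zero_mem_Tcone r⟩, (h ⟨z, hzU⟩).2) : Tcone r × Euc (n - 1)) = h ⟨z, hzU⟩ :=
      Prod.ext (Subtype.ext (hh hzU).symm) rfl
    rw [hI' _ (hapex _), this, h.symm_apply_apply]
  have htend : Tendsto (fun w => I (0, w)) (𝓝 (h ⟨z, hzU⟩).2) (𝓝[S] z) := by
    refine tendsto_nhdsWithin_iff.2
      ⟨?_, .of_forall fun w => hUS (hIU (hapex w))⟩
    have hcont : Continuous fun w => I (0, w) := hIc.comp_continuous (by fun_prop) hapex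
    simpa only [hIz] using hcont.tendsto (h ⟨z, hzU⟩).2
  refine ⟨I, _, hIc, hIinj, hIU.mono_right hUS, hIz, ?_⟩
  filter_upwards [htend.eventually (eventually_eventually_nhdsWithin.2 hU)] with w hw
  refine ⟨U, hw, hUS, h, fun hx => ?_⟩
  have : (⟨I (0, w), hx⟩ : U) = h.symm (⟨0, zero_mem_Tcone r⟩, w) := Subtype.ext (hI' _ (hapex w))
  rw [this, h.apply_symm_apply]

variable {F : Type*} [NormedAddCommGroup F] [NormedSpace ℝ F]

theorem finrank_real_prod_euc (hF : 1 ≤ Module.finrank ℝ F) :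
    Module.finrank ℝ (ℝ × Euc (Module.finrank ℝ F - 1)) = Module.finrank ℝ F := by
  simp only [Module.finrank_prod, Module.finrank_self, finrank_euclideanSpace_fin]
  omega

variable [FiniteDimensional ℝ F]

theorem HasConeNbhd.two_le (hcone : HasConeNbhd (Module.finrank ℝ F) r S z)
    (hF : 1 ≤ Module.finrank ℝ F) {g : F → Euc N} {x₀ : F} {C : Set F} (hC : C ∈ 𝓝 x₀)
    (hg : ContinuousOn g C) (hinj : Set.InjOn g C) (hgS : Set.MapsTo g C S) (hgx : g x₀ = z) :
    2 ≤ r := by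
  by_contra! hr
  obtain ⟨U, hU, -, h, hh⟩ := hcone
  have hT : ∀ u, 0 ≤ (h u).1.1.1 ∧ (h u).1.1.2 = 0 := fun u =>
    fst_nonneg_and_snd_eq_zero_of_mem_Tcone (by omega) (h u).1.2
  obtain ⟨k, hkc, hkinj, hk⟩ := exists_continuousOn_injOn_extension
    (f := fun u => ((h u).1.1.1, (h u).2)) (by fun_prop) (fun u v huv => by
      simp only [Prod.mk.injEq] at huv
      exact h.injective (Prod.ext (Subtype.ext (Prod.ext huv.1 ((hT u).2.trans (hT v).2.symm)))
        huv.2))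
  have hx₀ : x₀ ∈ C := mem_of_mem_nhds hC
  have hzU : z ∈ U := mem_of_mem_nhdsWithin (hgx ▸ hgS hx₀) hU
  have hV : C ∩ g ⁻¹' U ∈ 𝓝 x₀ := by
    have hgz : Tendsto g (𝓝 x₀) (𝓝[S] z) :=
      tendsto_nhdsWithin_iff.2 ⟨hgx ▸ hg.continuousAt hC, mem_of_superset hC hgS⟩
    exact inter_mem hC (hgz hU)
  have hopen := image_mem_nhds_of_continuousOn_injOn (finrank_real_prod_euc hF).symm hV
    (hkc.comp (hg.mono Set.inter_subset_left) fun c hc => hc.2)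
    (hkinj.comp (hinj.mono Set.inter_subset_left) fun c hc => hc.2)
  have hneg : Tendsto (fun t : ℝ => (-t, (h ⟨z, hzU⟩).2)) (𝓝[>] 0) (𝓝 ((k ∘ g) x₀)) := by
    have hkz : (k ∘ g) x₀ = (0, (h ⟨z, hzU⟩).2) := by
      rw [Function.comp_apply, hgx, hk ⟨z, hzU⟩, hh hzU]
      rfl
    rw [hkz]
    exact tendsto_nhdsWithin_of_tendsto_nhds (Continuous.tendsto' (by fun_prop) _ _ (by simp))
  obtain ⟨t, ⟨c, hc, hct⟩, ht : 0 < t⟩ :=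
    ((hneg.eventually hopen).and eventually_mem_nhdsWithin).exists
  have := (hT ⟨g c, hc.2⟩).1
  rw [Function.comp_apply, hk ⟨g c, hc.2⟩, Prod.mk.injEq] at hct
  linarith

theorem HasConeNbhd.le_two (hcone : HasConeNbhd (Module.finrank ℝ F) r S z) (hz : z ∈ S)
    (hF : 1 ≤ Module.finrank ℝ F) {T : Set (Euc N)} (hT : T ∈ 𝓝[S] z) {j : Euc N → F}
    (hj : ContinuousOn j T) (hinj : Set.InjOn j T) : r ≤ 2 := by
  by_contra! hr
  obtain ⟨I, y, hIc, hIinj, hIS, hIz, -⟩ := hcone.exists_parametrization hz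
  have hI : Tendsto I (𝓝[Tcone r ×ˢ Set.univ] (0, y)) (𝓝[S] z) := by
    refine tendsto_nhdsWithin_iff.2 ⟨?_, eventually_mem_nhdsWithin.mono hIS⟩
    simpa only [ContinuousWithinAt, hIz] using hIc (0, y) ⟨zero_mem_Tcone r, trivial⟩
  let Θ : ℝ × Euc (Module.finrank ℝ F - 1) → (ℝ × ℝ) × Euc (Module.finrank ℝ F - 1) :=
    fun p => (bentLine p.1, p.2)
  have hΘc : Continuous Θ := (continuous_bentLine.comp continuous_fst).prodMk continuous_snd
  have hΘinj : Function.Injective Θ := bentLine_injective.prodMap Function.injective_id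
  have hΘy : Θ (0, y) = (0, y) := by simp only [Θ, bentLine_zero]
  have hsmall : ∀ᶠ p in 𝓝 (0, y), Θ p ∈ Tcone r ×ˢ Set.univ := by
    have : ∀ᶠ p : ℝ × Euc (Module.finrank ℝ F - 1) in 𝓝 (0, y), |p.1| < 1 :=
      continuous_fst.abs.continuousAt.eventually_lt continuousAt_const (by simp)
    filter_upwards [this] with p hp using ⟨bentLine_mem_Tcone hr.le hp, trivial⟩
  have hΘ : Tendsto Θ (𝓝 (0, y)) (𝓝[Tcone r ×ˢ Set.univ] (0, y)) :=
    tendsto_nhdsWithin_iff.2 ⟨hΘc.tendsto' _ _ hΘy, hsmall⟩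
  have hopen := image_mem_nhds_of_continuousOn_injOn (f := j ∘ I ∘ Θ) (finrank_real_prod_euc hF)
    (hsmall.and ((hI.comp hΘ).eventually hT))
    (hj.comp (hIc.comp hΘc.continuousOn fun p hp => hp.1) fun p hp => hp.2)
    (hinj.comp (hIinj.comp hΘinj.injOn fun p hp => hp.1) fun p hp => hp.2)
  have hjz : (j ∘ I ∘ Θ) (0, y) = j z := by
    simp only [Function.comp_apply, hΘy, hIz]
  -- Points on the third ray, close to the apex, also have their image in the open set.
  have hray : Tendsto (fun t : ℝ => (((t, t * (2 : ℕ)), y) : (ℝ × ℝ) × _)) (𝓝[>] 0)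
      (𝓝[Tcone r ×ˢ Set.univ] (0, y)) := by
    refine tendsto_nhdsWithin_iff.2 ⟨tendsto_nhdsWithin_of_tendsto_nhds
      (Continuous.tendsto' (by fun_prop) _ _ (by simp)), ?_⟩
    filter_upwards [Ioo_mem_nhdsGT one_pos] with t ht
      using ⟨mk_mul_mem_Tcone hr ht.1.le ht.2, trivial⟩
  have hjT : Tendsto j (𝓝[T] z) (𝓝 (j z)) := hj z (mem_of_mem_nhdsWithin hz hT)
  have hjS : Tendsto j (𝓝[S] z) (𝓝 (j z)) :=
    hjT.mono_left (nhdsWithin_le_of_mem hT)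
  obtain ⟨t, ht : 0 < t, htR, htT, p, hp, hpt⟩ := (eventually_mem_nhdsWithin.and
    ((hray.eventually eventually_mem_nhdsWithin).and (((hI.comp hray).eventually hT).and
      ((hjS.comp (hI.comp hray)).eventually (hjz ▸ hopen))))).exists
  have hrays := hIinj hp.1 htR (hinj hp.2 htT hpt)
  simp only [Θ, bentLine, Prod.mk.injEq] at hrays
  grind

end ConeNeighborhood

/-! ### Barycentric coordinates -/

section Barycentric

open Topology

variable {E : Type*} [NormedAddCommGroup E] [InnerProductSpace ℝ E]

/-- Barycentric coordinates of the simplex with vertex set `s`, extended to the ambient space so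
that they do not change in directions orthogonal to `s`: `lam v` is the coordinate of the vertex
`v`.  The values `lam v` for `v ∉ s` are irrelevant. -/
structure IsBarycentric (s : Finset E) (lam : E → E →ᵃ[ℝ] ℝ) : Prop where
  apply_vertex : ∀ v ∈ s, ∀ w ∈ s, lam v w = if w = v then 1 else 0
  apply_add_orthogonal : ∀ v ∈ s, ∀ y, ∀ w ∈ (vectorSpan ℝ (s : Set E))ᗮ, lam v (y + w) = lam v y

theorem add_mem_affineSpan {s : Set E} {y d : E} (hy : y ∈ affineSpan ℝ s)
    (hd : d ∈ vectorSpan ℝ s) : y + d ∈ affineSpan ℝ s := by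
  rw [add_comm]
  exact AffineSubspace.vadd_mem_of_mem_direction (direction_affineSpan ℝ s ▸ hd) hy

theorem sub_mem_vectorSpan {s : Set E} {y z : E} (hy : y ∈ affineSpan ℝ s)
    (hz : z ∈ affineSpan ℝ s) : y - z ∈ vectorSpan ℝ s := by
  rw [← direction_affineSpan]
  exact AffineSubspace.vsub_mem_direction hy hz

theorem exists_isBarycentric [FiniteDimensional ℝ E] {s : Finset E} (hs : s.Nonempty)
    (hi : AffineIndependent ℝ ((↑) : s → E)) : ∃ lam, IsBarycentric s lam := by
  obtain ⟨t, hst, hti, htt⟩ := exists_subset_affineIndependent_affineSpan_eq_top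
    (s := (s : Set E)) hi
  let b : AffineBasis t ℝ E := ⟨Subtype.val, hti, by simpa using htt⟩
  have : Nonempty (affineSpan ℝ (s : Set E)) := (hs.to_set.mono (subset_affineSpan ℝ _)).to_subtype
  let q : E →ᵃ[ℝ] E := (affineSpan ℝ (s : Set E)).subtype.comp
    (EuclideanGeometry.orthogonalProjection (affineSpan ℝ (s : Set E))).toAffineMap
  have hq : ∀ y ∈ affineSpan ℝ (s : Set E), q y = y :=
    fun y hy => EuclideanGeometry.orthogonalProjection_eq_self_iff.2 hy
  refine ⟨fun v => if h : v ∈ t then (b.coord ⟨v, h⟩).comp q else 0, fun v hv w hw => ?_,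
    fun v hv y w hw => ?_⟩
  · have hbw : b ⟨w, hst hw⟩ = w := rfl
    rw [dif_pos (hst hv), AffineMap.comp_apply, hq w (subset_affineSpan ℝ _ hw), ← hbw,
      b.coord_apply]
    simp only [Subtype.mk.injEq, eq_comm, hbw]
  · have hproj : q (y + w) = q y := by
      rw [add_comm]
      refine congrArg Subtype.val
        (EuclideanGeometry.orthogonalProjection_eq_orthogonalProjection_iff_vsub_mem.2 ?_)
      rwa [vsub_eq_sub, add_sub_cancel_right, direction_affineSpan]
    simp only [dif_pos (hst hv)]
    exact congrArg (b.coord ⟨v, hst hv⟩) hproj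

theorem affineMap_sum_apply {ι F : Type*} [AddCommGroup F] [Module ℝ F] (t : Finset ι)
    (f : ι → E →ᵃ[ℝ] F) (y : E) : (∑ i ∈ t, f i) y = ∑ i ∈ t, f i y :=
  map_sum (⟨⟨fun g => g y, rfl⟩, fun _ _ => rfl⟩ : (E →ᵃ[ℝ] F) →+ F) f t

namespace IsBarycentric

variable {s : Finset E} {lam : E → E →ᵃ[ℝ] ℝ} {y : E}

theorem apply_eq_zero [DecidableEq E] (h : IsBarycentric s lam) {t : Set E} {v : E} (hv : v ∈ s)
    (hts : t ⊆ s.erase v) (hy : y ∈ affineSpan ℝ t) : lam v y = 0 := by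
  refine AffineMap.eqOn_affineSpan (g := AffineMap.const ℝ E (0 : ℝ)) (fun w hw => ?_) hy
  obtain ⟨hwv, hws⟩ := Finset.mem_erase.1 (hts hw)
  rw [h.apply_vertex v hv w hws, if_neg hwv, AffineMap.const_apply]

theorem sum_eq_one (h : IsBarycentric s lam) (hy : y ∈ affineSpan ℝ (s : Set E)) :
    ∑ v ∈ s, lam v y = 1 := by
  have := AffineMap.eqOn_affineSpan (f := ∑ v ∈ s, lam v) (g := AffineMap.const ℝ E (1 : ℝ))
    (fun w hw => ?_) hy
  · simpa [affineMap_sum_apply] using this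
  · simpa [affineMap_sum_apply, Finset.sum_congr rfl fun v hv => h.apply_vertex v hv w hw] using hw

theorem sum_smul_eq (h : IsBarycentric s lam) (hy : y ∈ affineSpan ℝ (s : Set E)) :
    ∑ v ∈ s, lam v y • v = y := by
  have := AffineMap.eqOn_affineSpan (g := AffineMap.id ℝ E)
    (f := ∑ v ∈ s, (LinearMap.toSpanSingleton ℝ E v).toAffineMap.comp (lam v)) (fun w hw => ?_) hy
  · simpa [affineMap_sum_apply] using this
  · have hsum : ∑ v ∈ s, lam v w • v = ∑ v ∈ s, if w = v then v else 0 :=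
      Finset.sum_congr rfl fun v hv => by
        rw [h.apply_vertex v hv w hw, ite_smul, one_smul, zero_smul]
    simp [affineMap_sum_apply, hsum, Finset.mem_coe.1 hw]

theorem mem_convexHull_iff (h : IsBarycentric s lam) :
    y ∈ convexHull ℝ (s : Set E) ↔ y ∈ affineSpan ℝ (s : Set E) ∧ ∀ v ∈ s, 0 ≤ lam v y := by
  refine ⟨fun hy => ⟨convexHull_subset_affineSpan _ hy, fun v hv => ?_⟩, fun ⟨hy, hnonneg⟩ =>
    Finset.mem_convexHull'.2 ⟨fun v => lam v y, hnonneg, h.sum_eq_one hy, h.sum_smul_eq hy⟩⟩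
  refine convexHull_min (fun w hw => ?_) ((convex_Ici (0 : ℝ)).affine_preimage (lam v)) hy
  rw [Set.mem_preimage, h.apply_vertex v hv w hw, Set.mem_Ici]
  split_ifs <;> norm_num

theorem exists_eq_add_orthogonal_iff [FiniteDimensional ℝ E] (h : IsBarycentric s lam)
    (hs : s.Nonempty) :
    (∃ c ∈ convexHull ℝ (s : Set E), ∃ w ∈ (vectorSpan ℝ (s : Set E))ᗮ, y = c + w) ↔
      ∀ v ∈ s, 0 ≤ lam v y := by
  constructor
  · rintro ⟨c, hc, w, hw, rfl⟩ v hv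
    rw [h.apply_add_orthogonal v hv c w hw]
    exact (h.mem_convexHull_iff.1 hc).2 v hv
  · intro hy
    obtain ⟨v₀, hv₀⟩ := hs
    obtain ⟨d, hd, w, hw, hdw⟩ :=
      (vectorSpan ℝ (s : Set E)).exists_add_mem_mem_orthogonal (y - v₀)
    have hydw : y = v₀ + d + w := by rw [add_assoc, ← hdw, add_sub_cancel]
    refine ⟨v₀ + d, h.mem_convexHull_iff.2
      ⟨add_mem_affineSpan (subset_affineSpan ℝ _ hv₀) hd, fun v hv => ?_⟩, w, hw, hydw⟩
    rw [← h.apply_add_orthogonal v hv _ w hw, ← hydw]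
    exact hy v hv

theorem mem_convexHull_erase [DecidableEq E] (h : IsBarycentric s lam) {v : E} (hv : v ∈ s)
    (hy : y ∈ convexHull ℝ (s : Set E)) (hvy : lam v y = 0) :
    y ∈ convexHull ℝ (s.erase v : Set E) := by
  obtain ⟨hyspan, hnonneg⟩ := h.mem_convexHull_iff.1 hy
  rw [Finset.mem_convexHull']
  refine ⟨fun w => lam w y, fun w hw => hnonneg w (Finset.mem_of_mem_erase hw), ?_, ?_⟩
  · rw [← h.sum_eq_one hyspan, ← Finset.add_sum_erase _ _ hv, hvy, zero_add]
  · refine Eq.trans ?_ (h.sum_smul_eq hyspan)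
    rw [← Finset.add_sum_erase _ _ hv, hvy, zero_smul, zero_add]

theorem eventually_add_mem_convexHull [FiniteDimensional ℝ E] (h : IsBarycentric s lam)
    (hy : y ∈ affineSpan ℝ (s : Set E)) (hpos : ∀ v ∈ s, 0 < lam v y) :
    ∀ᶠ d : vectorSpan ℝ (s : Set E) in 𝓝 0, y + d ∈ convexHull ℝ (s : Set E) := by
  have hev : ∀ᶠ x in 𝓝 y, ∀ v ∈ s, 0 < lam v x := (Filter.eventually_all_finset s).2 fun v hv =>
    (lam v).continuous_of_finiteDimensional.continuousAt.eventually (lt_mem_nhds (hpos v hv))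
  have htend : Tendsto (fun d : vectorSpan ℝ (s : Set E) => y + d) (𝓝 0) (𝓝 y) :=
    Continuous.tendsto' (by fun_prop) _ _ (by simp)
  filter_upwards [htend.eventually hev] with d hd
  exact h.mem_convexHull_iff.2 ⟨add_mem_affineSpan hy d.2, fun v hv => (hd v hv).le⟩

end IsBarycentric

end Barycentric

/-! ### Euler characteristics of links -/

section Link

theorem eulerChar_coe_eq_sum {F : Finset (Finset (Euc N))} (hF : ∀ ω ∈ F, ω.Nonempty) :
    eulerChar (F : Set (Finset (Euc N))) = ∑ ω ∈ F, (-1 : ℤ) ^ (ω.card - 1) := by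
  have hcard : ∀ ω ∈ F, ∀ k, ω.card = k + 1 ↔ ω.card - 1 = k := fun ω hω k => by
    have := (hF ω hω).card_pos
    omega
  have hterm : ∀ k : ℕ, (-1 : ℤ) ^ k * fcount (F : Set (Finset (Euc N))) k =
      ∑ ω ∈ F with ω.card - 1 = k, (-1 : ℤ) ^ (ω.card - 1) := fun k => by
    have hset : {ω ∈ (F : Set (Finset (Euc N))) | ω.card = k + 1} =
        (F.filter fun ω => ω.card - 1 = k : Finset (Finset (Euc N))) := by
      ext ω
      simp only [Finset.mem_coe, Set.mem_ofPred_eq, Finset.coe_filter]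
      exact and_congr_right fun hω => hcard ω hω k
    rw [fcount, hset, Set.ncard_coe_finset,
      Finset.sum_congr rfl fun ω hω => by rw [(Finset.mem_filter.1 hω).2], Finset.sum_const,
      nsmul_eq_mul, mul_comm]
  rw [eulerChar, finsum_congr hterm, finsum_eq_sum_of_support_subset
    (s := F.image fun ω => ω.card - 1) _ fun k hk => ?_]
  · exact Finset.sum_fiberwise_of_maps_to (fun ω hω => Finset.mem_image_of_mem _ hω) _
  · obtain ⟨ω, hω, -⟩ := Finset.exists_ne_zero_of_sum_ne_zero hk
    obtain ⟨hωF, hωk⟩ := Finset.mem_filter.1 hω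
    exact Finset.mem_coe.2 (Finset.mem_image.2 ⟨ω, hωF, hωk⟩)

variable {K : SimplicialComplex ℝ (Euc N)} {s t : Finset (Euc N)}

theorem sdiff_mem_linkFaces (ht : t ∈ K.faces) (hst : s ⊂ t) : t \ s ∈ linkFaces K s := by
  refine ⟨K.down_closed ht Finset.sdiff_subset (Finset.sdiff_nonempty.2 hst.2),
    Finset.disjoint_sdiff, ?_⟩
  rwa [Finset.union_sdiff_of_subset hst.1]

theorem linkFaces_finite (hfin : K.faces.Finite) : (linkFaces K s).Finite :=
  hfin.subset fun _ hω => hω.1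

theorem eulerChar_linkFaces_eq_sum (hfin : K.faces.Finite) :
    eulerChar (linkFaces K s) =
      ∑ ω ∈ (linkFaces_finite (s := s) hfin).toFinset, (-1 : ℤ) ^ (ω.card - 1) := by
  rw [← eulerChar_coe_eq_sum, Set.Finite.coe_toFinset]
  exact fun ω hω => K.nonempty_of_mem_faces ((Set.Finite.mem_toFinset _).1 hω).1

theorem exists_linkFaces_eq_pair (hfin : K.faces.Finite)
    (hcard : ∀ t ∈ K.faces, t.card ≤ s.card + 1) (hlink : eulerChar (linkFaces K s) = 2) :
    ∃ a b, a ≠ b ∧ linkFaces K s = {{a}, {b}} := by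
  have hone : ∀ ω ∈ linkFaces K s, ω.card = 1 := fun ω ⟨hω, hdisj, hunion⟩ => by
    have hle := hcard _ hunion
    rw [Finset.card_union_of_disjoint hdisj] at hle
    have := (K.nonempty_of_mem_faces hω).card_pos
    omega
  have htwo : (linkFaces K s).ncard = 2 := by
    rw [eulerChar_linkFaces_eq_sum hfin, Finset.sum_congr rfl fun ω hω => by
      rw [hone ω ((Set.Finite.mem_toFinset _).1 hω)]] at hlink
    rw [Set.ncard_eq_toFinset_card _ (linkFaces_finite hfin)]
    exact_mod_cast show ((linkFaces_finite hfin).toFinset.card : ℤ) = 2 by simpa using hlink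
  obtain ⟨ω₁, ω₂, hne, heq⟩ := Set.ncard_eq_two.1 htwo
  obtain ⟨a, rfl⟩ := Finset.card_eq_one.1 (hone ω₁ (by simp [heq]))
  obtain ⟨b, rfl⟩ := Finset.card_eq_one.1 (hone ω₂ (by simp [heq]))
  exact ⟨a, b, fun hab => hne (congrArg _ hab), heq⟩

theorem singleton_mem_linkFaces_iff {a : Euc N} :
    {a} ∈ linkFaces K s ↔ a ∉ s ∧ insert a s ∈ K.faces := by
  simp only [linkFaces, Set.mem_ofPred_eq, Finset.disjoint_singleton_right,
    Finset.union_comm s, ← Finset.insert_eq]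
  exact ⟨And.right, fun h => ⟨K.down_closed h.2 (by simp) (by simp), h⟩⟩

end Link

/-! ### Carriers and the strata of cone type -/

section Carrier

open Topology

variable {K : SimplicialComplex ℝ (Euc N)} {s t : Finset (Euc N)} {z : Euc N}

/-- `s` is the carrier of the point `z`, the smallest face of `K` containing it. -/
structure IsCarrier (K : SimplicialComplex ℝ (Euc N)) (s : Finset (Euc N)) (z : Euc N) :
    Prop where
  mem_faces : s ∈ K.faces
  mem_convexHull : z ∈ convexHull ℝ (s : Set (Euc N))
  subset : ∀ t ∈ K.faces, z ∈ convexHull ℝ (t : Set (Euc N)) → s ⊆ t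

theorem exists_isCarrier (hz : z ∈ K.space) : ∃ s, IsCarrier K s z := by
  obtain ⟨s, ⟨hs, hzs⟩, hmin⟩ := exists_minimal_of_wellFoundedLT
    (fun s => s ∈ K.faces ∧ z ∈ convexHull ℝ (s : Set (Euc N)))
    (by simpa using SimplicialComplex.mem_space_iff.1 hz)
  refine ⟨s, hs, hzs, fun t ht hzt => ?_⟩
  have hzst : z ∈ convexHull ℝ ((s ∩ t : Finset (Euc N)) : Set (Euc N)) := by
    rw [Finset.coe_inter]
    exact K.inter_subset_convexHull hs ht ⟨hzs, hzt⟩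
  have hne : (s ∩ t).Nonempty := Finset.coe_nonempty.1 (convexHull_nonempty_iff.1 ⟨z, hzst⟩)
  exact (hmin ⟨K.down_closed hs Finset.inter_subset_left hne, hzst⟩ Finset.inter_subset_left).trans
    Finset.inter_subset_right

namespace IsCarrier

theorem mem_affineSpan (h : IsCarrier K s z) : z ∈ affineSpan ℝ (s : Set (Euc N)) :=
  convexHull_subset_affineSpan _ h.mem_convexHull

theorem barycentric_pos (h : IsCarrier K s z) (ht : t ∈ K.faces) (hst : s ⊆ t)
    {lam : Euc N → Euc N →ᵃ[ℝ] ℝ} (hlam : IsBarycentric t lam) {v : Euc N} (hv : v ∈ s) :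
    0 < lam v z := by
  have hzt : z ∈ convexHull ℝ (t : Set (Euc N)) :=
    convexHull_mono (Finset.coe_subset.2 hst) h.mem_convexHull
  refine ((hlam.mem_convexHull_iff.1 hzt).2 v (hst hv)).lt_of_ne' fun hzero => ?_
  have hze := hlam.mem_convexHull_erase (hst hv) hzt hzero
  have hne : (t.erase v).Nonempty := Finset.coe_nonempty.1 (convexHull_nonempty_iff.1 ⟨z, hze⟩)
  exact Finset.notMem_erase v t
    (h.subset _ (K.down_closed ht (Finset.erase_subset v t) hne) hze hv)

theorem mem_nhdsWithin_space (h : IsCarrier K s z) (hfin : K.faces.Finite) {T : Set (Euc N)}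
    (hT : ∀ t ∈ K.faces, s ⊆ t → convexHull ℝ (t : Set (Euc N)) ⊆ T) : T ∈ 𝓝[K.space] z := by
  have hclosed : IsClosed (⋃ t ∈ {t ∈ K.faces | z ∉ convexHull ℝ (t : Set (Euc N))},
      convexHull ℝ (t : Set (Euc N))) :=
    (hfin.subset fun t ht => ht.1).isClosed_biUnion fun t _ => t.finite_toSet.isClosed_convexHull ℝ
  filter_upwards [mem_nhdsWithin_of_mem_nhds (hclosed.isOpen_compl.mem_nhds (by simp)),
    self_mem_nhdsWithin] with y hy hyK
  obtain ⟨t, ht, hyt⟩ := SimplicialComplex.mem_space_iff.1 hyK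
  refine hT t ht (h.subset t ht ?_) hyt
  by_contra hzt
  exact hy (Set.mem_biUnion (show t ∈ {t ∈ K.faces | _} from ⟨ht, hzt⟩) hyt)

end IsCarrier

theorem finrank_vectorSpan_add_one (hs : s ∈ K.faces) :
    Module.finrank ℝ (vectorSpan ℝ (s : Set (Euc N))) + 1 = s.card := by
  have : Nonempty s := (K.nonempty_of_mem_faces hs).to_subtype
  have hrange : Set.range ((↑) : s → Euc N) = s := Subtype.range_coe
  rw [← hrange, (K.indep hs).finrank_vectorSpan_add_one, Fintype.card_coe]

/-- Otherwise the apex set `{cone point} × ℝ^{n-1}` would be covered near `x` by finitely many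
simplices of dimension at most `n - 2`; by Baire's theorem an open part of `ℝ^{n-1}` would embed
in one of them. -/
theorem HasConeNbhd.exists_notMem_convexHull {n r : ℕ} {x : Euc N}
    (hcone : HasConeNbhd n r K.space x) (hx : x ∈ K.space) (hfin : K.faces.Finite) :
    ∃ z ∈ K.space, HasConeNbhd n r K.space z ∧
      ∀ s ∈ K.faces, s.card < n → z ∉ convexHull ℝ (s : Set (Euc N)) := by
  obtain ⟨I, y, hIc, hIinj, hIK, -, hev⟩ := hcone.exists_parametrization hx
  let f : Euc (n - 1) → Euc N := fun w => I (0, w)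
  have hapex : ∀ w, ((0 : ℝ × ℝ), w) ∈ Tcone r ×ˢ (Set.univ : Set (Euc (n - 1))) :=
    fun w => ⟨zero_mem_Tcone r, trivial⟩
  have hfc : Continuous f := hIc.comp_continuous (by fun_prop) hapex
  have hfinj : Function.Injective f := fun v w hvw =>
    (Prod.ext_iff.1 (hIinj (hapex v) (hapex w) hvw)).2
  have hmeagre : IsMeagre (⋃ s ∈ {s ∈ K.faces | s.card < n},
      f ⁻¹' convexHull ℝ (s : Set (Euc N))) := by
    refine isMeagre_biUnion (hfin.subset fun s hs => hs.1).countable fun s ⟨hs, hsn⟩ => ?_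
    refine IsNowhereDense.isMeagre (((s.finite_toSet.isClosed_convexHull ℝ).preimage
      hfc).isNowhereDense_iff.2 (Set.eq_empty_iff_forall_notMem.2 fun w hw => ?_))
    obtain ⟨v, hv⟩ := K.nonempty_of_mem_faces hs
    let D := vectorSpan ℝ (s : Set (Euc N))
    have hle := finrank_le_of_continuousOn_injOn (E := Euc (n - 1)) (F := D)
      (f := fun w => D.orthogonalProjectionOnto (f w - v)) (mem_interior_iff_mem_nhds.1 hw)
      (by fun_prop) fun w₁ hw₁ w₂ hw₂ heq => ?_
    · have hrank : Module.finrank ℝ D + 1 = s.card := finrank_vectorSpan_add_one hs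
      rw [finrank_euclideanSpace_fin] at hle
      omega
    · have hD : ∀ w ∈ f ⁻¹' convexHull ℝ (s : Set (Euc N)), f w - v ∈ D := fun w hw =>
        sub_mem_vectorSpan (convexHull_subset_affineSpan _ hw) (subset_affineSpan ℝ _ hv)
      have := congrArg (Subtype.val) heq
      simp only [Submodule.coe_orthogonalProjectionOnto_apply,
        Submodule.starProjection_eq_self_iff.2 (hD _ hw₁),
        Submodule.starProjection_eq_self_iff.2 (hD _ hw₂)] at this
      exact hfinj (sub_left_injective this)
  obtain ⟨V, hVsub, hVo, hyV⟩ := mem_nhds_iff.1 hev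
  by_contra! hcon
  refine not_isMeagre_of_isOpen hVo ⟨y, hyV⟩ (hmeagre.mono fun w hw => ?_)
  obtain ⟨s, hs, hsn, hws⟩ := hcon (f w) (hIK (hapex w)) (hVsub hw)
  exact Set.mem_biUnion (show s ∈ {s ∈ K.faces | _} from ⟨hs, hsn⟩) hws

end Carrier

/-! ### The stratification rank -/

section HalfChart

open Topology

variable {E : Type*} [NormedAddCommGroup E] [InnerProductSpace ℝ E]

/-- `φ` and `γ` are inverse charts of the half cell `T` near its boundary point `z`: they identify
`T` with the half space `{v | 0 ≤ v.1}` of `ℝ × D`, and the boundary of `T`, which runs in the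
direction `D`, with `{0} × D` by means of `d ↦ z + d`. -/
structure IsHalfChart (T : Set E) (D : Submodule ℝ E) (z : E) (φ : E → ℝ × D) (γ : ℝ × D → E) :
    Prop where
  continuous : Continuous φ
  continuous_symm : Continuous γ
  fst_nonneg : ∀ y ∈ T, 0 ≤ (φ y).1
  left_inv : ∀ y ∈ T, γ (φ y) = y
  right_inv : ∀ v, φ (γ v) = v
  symm_zero : ∀ d : D, γ (0, d) = z + d
  eventually_mem : ∀ᶠ v in 𝓝 0, 0 ≤ v.1 → γ v ∈ T

namespace IsBarycentric

variable [DecidableEq E] {s : Finset E} {a z : E} {lam : E → E →ᵃ[ℝ] ℝ}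

theorem apply_add_add_smul (h : IsBarycentric (insert a s) lam) (ha : a ∉ s)
    (hz : z ∈ affineSpan ℝ (s : Set E)) (v : ℝ × vectorSpan ℝ (s : Set E)) :
    lam a (z + v.2 + v.1 • (a - z)) = v.1 := by
  have has : a ∈ insert a s := Finset.mem_insert_self a s
  have hzero : ∀ y ∈ affineSpan ℝ (s : Set E), lam a y = 0 := fun y hy =>
    h.apply_eq_zero has (by rw [Finset.erase_insert ha]) hy
  rw [add_comm _ (v.1 • _), ← vadd_eq_add, AffineMap.map_vadd, map_smul, ← vsub_eq_sub,
    AffineMap.linearMap_vsub, h.apply_vertex a has a has, hzero z hz,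
    hzero _ (add_mem_affineSpan hz v.2.2)]
  simp

theorem sub_sub_smul_mem_vectorSpan (h : IsBarycentric (insert a s) lam) (ha : a ∉ s)
    (hz : z ∈ affineSpan ℝ (s : Set E)) {y : E}
    (hy : y ∈ affineSpan ℝ ((insert a s : Finset E) : Set E)) :
    y - z - lam a y • (a - z) ∈ vectorSpan ℝ (s : Set E) := by
  have hone := h.sum_eq_one hy
  have hsum := h.sum_smul_eq hy
  rw [Finset.sum_insert ha] at hone hsum
  have hcomb : y - z - lam a y • (a - z) = ∑ v ∈ s, lam v y • (v - z) := by
    simp only [smul_sub, Finset.sum_sub_distrib, ← Finset.sum_smul, eq_sub_of_add_eq' hone,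
      eq_sub_of_add_eq' hsum, sub_smul, one_smul]
    abel
  exact hcomb ▸ Submodule.sum_mem _ fun v hv =>
    Submodule.smul_mem _ _ (sub_mem_vectorSpan (subset_affineSpan ℝ _ hv) hz)

theorem exists_isHalfChart [FiniteDimensional ℝ E] (h : IsBarycentric (insert a s) lam)
    (ha : a ∉ s) (hz : z ∈ affineSpan ℝ (s : Set E)) (hpos : ∀ v ∈ s, 0 < lam v z) :
    ∃ φ γ, IsHalfChart (convexHull ℝ (insert a s : Finset E)) (vectorSpan ℝ (s : Set E)) z φ γ := by
  let D := vectorSpan ℝ (s : Set E)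
  let γ : ℝ × D → E := fun v => z + v.2 + v.1 • (a - z)
  have has : a ∈ insert a s := Finset.mem_insert_self a s
  have hcoord : ∀ v, lam a (γ v) = v.1 := h.apply_add_add_smul ha hz
  have hcont : ∀ v, Continuous (lam v) := fun v => (lam v).continuous_of_finiteDimensional
  have hla := hcont a
  have hγ : Continuous γ := by fun_prop
  refine ⟨fun y => (lam a y, D.orthogonalProjectionOnto (y - z - lam a y • (a - z))), γ,
    by fun_prop, hγ, fun y hy => (h.mem_convexHull_iff.1 hy).2 a has, fun y hy => ?_,
    fun v => Prod.ext (hcoord v) ?_, fun d => by simp [γ], ?_⟩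
  · have hmem : y - z - lam a y • (a - z) ∈ D :=
      h.sub_sub_smul_mem_vectorSpan ha hz (convexHull_subset_affineSpan _ hy)
    simp only [γ, Submodule.coe_orthogonalProjectionOnto_apply,
      Submodule.starProjection_eq_self_iff.2 hmem]
    abel
  · have hv : γ v - z - v.1 • (a - z) = v.2 := by simp only [γ]; abel
    simp only [hcoord, hv]
    exact Submodule.orthogonalProjectionOnto_mem_subspace_eq_self v.2
  · have hev : ∀ᶠ v in 𝓝 (0 : ℝ × D), ∀ w ∈ s, 0 < lam w (γ v) :=
      (Filter.eventually_all_finset s).2 fun w hw =>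
        ((hcont w).comp hγ).continuousAt.eventually (lt_mem_nhds (by simpa [γ] using hpos w hw))
    have hmono : affineSpan ℝ (s : Set E) ≤ affineSpan ℝ ((insert a s : Finset E) : Set E) :=
      affineSpan_mono ℝ (Finset.coe_subset.2 (Finset.subset_insert a s))
    filter_upwards [hev] with v hv hv0
    refine h.mem_convexHull_iff.2 ⟨add_mem_affineSpan (hmono (add_mem_affineSpan hz v.2.2))
      (Submodule.smul_mem _ _ (sub_mem_vectorSpan (subset_affineSpan ℝ _ has) (hmono hz))), ?_⟩
    exact Finset.forall_mem_insert .. |>.2 ⟨(hcoord v).symm ▸ hv0, fun w hw => (hv w hw).le⟩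

end IsBarycentric

end HalfChart

section StrRank

open Topology

variable {n r : ℕ} {S : Set (Euc N)} {z : Euc N}

theorem HasConeNbhd.eq_two_of_leftInvOn {F : Type*} [NormedAddCommGroup F] [NormedSpace ℝ F]
    [FiniteDimensional ℝ F] (hcone : HasConeNbhd (Module.finrank ℝ F) r S z)
    (hF : 1 ≤ Module.finrank ℝ F) {j : Euc N → F} {g : F → Euc N} {T : Set (Euc N)} {C : Set F}
    {x₀ : F} (hT : T ∈ 𝓝[S] z) (hTS : T ⊆ S) (hC : C ∈ 𝓝 x₀) (hgx : g x₀ = z)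
    (hj : ContinuousOn j T) (hg : ContinuousOn g C) (hgT : Set.MapsTo g C T)
    (hgj : Set.LeftInvOn g j T) (hjg : Set.LeftInvOn j g C) : r = 2 :=
  le_antisymm
    (hcone.le_two (hgx ▸ hTS (hgT (mem_of_mem_nhds hC))) hF hT hj hgj.injOn)
    (hcone.two_le hF hC hg hjg.injOn (hgT.mono_right hTS) hgx)

section Glue

variable {D : Submodule ℝ (Euc N)} {Ta Tb : Set (Euc N)} {φa φb : Euc N → ℝ × D}
  {γa γb : ℝ × D → Euc N}

theorem IsHalfChart.exists_glue (ha : IsHalfChart Ta D z φa γa)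
    (hb : IsHalfChart Tb D z φb γb) (hD : ∀ y ∈ Ta ∩ Tb, y - z ∈ D) :
    ∃ j : Euc N → ℝ × D, (∀ y ∈ Ta, j y = φa y) ∧ ∀ y ∈ Tb, j y = (-(φb y).1, (φb y).2) := by
  refine ⟨fun y => if y ∈ Ta then φa y else (-(φb y).1, (φb y).2), fun y hy => if_pos hy,
    fun y hy => ?_⟩
  by_cases hya : y ∈ Ta
  · have hy' : y = z + (⟨y - z, hD y ⟨hya, hy⟩⟩ : D) := by simp
    have hφa := ha.right_inv (0, ⟨y - z, hD y ⟨hya, hy⟩⟩)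
    have hφb := hb.right_inv (0, ⟨y - z, hD y ⟨hya, hy⟩⟩)
    rw [ha.symm_zero, ← hy'] at hφa
    rw [hb.symm_zero, ← hy'] at hφb
    simp [hya, hφa, hφb]
  · exact if_neg hya

theorem IsHalfChart.exists_glue_symm (ha : IsHalfChart Ta D z φa γa)
    (hb : IsHalfChart Tb D z φb γb) :
    ∃ g : ℝ × D → Euc N, Continuous g ∧ (∀ v, 0 ≤ v.1 → g v = γa v) ∧
      ∀ v, v.1 ≤ 0 → g v = γb (-v.1, v.2) := by
  have hzero : ∀ v : ℝ × D, 0 = v.1 → γa v = γb (-v.1, v.2) := by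
    rintro ⟨_, d⟩ rfl
    simp [ha.symm_zero, hb.symm_zero]
  refine ⟨fun v => if 0 ≤ v.1 then γa v else γb (-v.1, v.2),
    Continuous.if_le ha.continuous_symm (hb.continuous_symm.comp (by fun_prop)) continuous_const
      continuous_fst hzero, fun v hv => if_pos hv, fun v hv => ?_⟩
  rcases hv.lt_or_eq with hv | hv
  · exact if_neg hv.not_ge
  · exact (if_pos hv.ge).trans (hzero v hv.symm)

theorem HasConeNbhd.eq_two_of_isHalfChart (hcone : HasConeNbhd (Module.finrank ℝ D + 1) r S z)
    (ha : IsHalfChart Ta D z φa γa) (hb : IsHalfChart Tb D z φb γb) (hTa : IsClosed Ta)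
    (hTb : IsClosed Tb) (hD : ∀ y ∈ Ta ∩ Tb, y - z ∈ D) (hT : Ta ∪ Tb ∈ 𝓝[S] z)
    (hTS : Ta ∪ Tb ⊆ S) : r = 2 := by
  obtain ⟨j, hja, hjb⟩ := ha.exists_glue hb hD
  obtain ⟨g, hg, hga, hgb⟩ := ha.exists_glue_symm hb
  have hrank : Module.finrank ℝ (ℝ × D) = Module.finrank ℝ D + 1 := by
    rw [Module.finrank_prod, Module.finrank_self, add_comm]
  have hreflect : Continuous fun v : ℝ × D => (-v.1, v.2) := by fun_prop
  have hCb : ∀ᶠ v in 𝓝 (0 : ℝ × D), v.1 ≤ 0 → γb (-v.1, v.2) ∈ Tb := by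
    simpa using (hreflect.tendsto' 0 0 (by simp)).eventually hb.eventually_mem
  refine HasConeNbhd.eq_two_of_leftInvOn (hrank.symm ▸ hcone) (by omega) (j := j) hT hTS
    (ha.eventually_mem.and hCb) ?_ ?_ hg.continuousOn ?_ ?_ ?_
  · simpa using (hga 0 le_rfl).trans (ha.symm_zero 0)
  · exact (ha.continuous.continuousOn.congr hja).union_of_isClosed
      ((hreflect.comp hb.continuous).continuousOn.congr hjb) hTa hTb
  · rintro v ⟨hva, hvb⟩
    rcases le_total 0 v.1 with hv | hv
    · exact Or.inl (hga v hv ▸ hva hv)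
    · exact Or.inr (hgb v hv ▸ hvb hv)
  · rintro y (hy | hy)
    · rw [hja _ hy, hga _ (ha.fst_nonneg y hy), ha.left_inv y hy]
    · rw [hjb _ hy, hgb _ (neg_nonpos.2 (hb.fst_nonneg y hy)), neg_neg, hb.left_inv y hy]
  · rintro v ⟨hva, hvb⟩
    rcases le_total 0 v.1 with hv | hv
    · rw [hga v hv, hja _ (hva hv), ha.right_inv]
    · rw [hgb v hv, hjb _ (hvb hv), hb.right_inv, neg_neg]

end Glue

variable {K : SimplicialComplex ℝ (Euc N)} {s : Finset (Euc N)}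

theorem IsCarrier.eq_two_of_card_eq_add_one (h : IsCarrier K s z)
    (hcone : HasConeNbhd n r K.space z) (hn : 1 ≤ n) (hfin : K.faces.Finite)
    (hcard : ∀ t ∈ K.faces, t.card ≤ n + 1) (hs : s.card = n + 1) : r = 2 := by
  obtain ⟨lam, hlam⟩ := exists_isBarycentric (K.nonempty_of_mem_faces h.mem_faces)
    (K.indep h.mem_faces)
  have hrank := finrank_vectorSpan_add_one h.mem_faces
  obtain rfl : Module.finrank ℝ (vectorSpan ℝ (s : Set (Euc N))) = n := by omega
  have hT : convexHull ℝ (s : Set (Euc N)) ∈ 𝓝[K.space] z := by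
    refine h.mem_nhdsWithin_space hfin fun t ht hst => ?_
    rw [Finset.eq_of_subset_of_card_le hst ((hcard t ht).trans_eq hs.symm)]
  have hpos : ∀ v ∈ s, 0 < lam v z := fun v => h.barycentric_pos h.mem_faces subset_rfl hlam
  refine hcone.eq_two_of_leftInvOn hn (g := fun d => z + d)
    (j := fun y => (vectorSpan ℝ (s : Set (Euc N))).orthogonalProjectionOnto (y - z)) hT
    (K.convexHull_subset_space h.mem_faces)
    (hlam.eventually_add_mem_convexHull h.mem_affineSpan hpos) (by simp) (by fun_prop)
    (by fun_prop) (fun d hd => hd) (fun y hy => ?_) fun d _ => ?_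
  · have hmem := sub_mem_vectorSpan (convexHull_subset_affineSpan _ hy) h.mem_affineSpan
    simp only [Submodule.coe_orthogonalProjectionOnto_apply,
      Submodule.starProjection_eq_self_iff.2 hmem, add_sub_cancel]
  · simp

theorem IsCarrier.eq_two_of_card_eq (h : IsCarrier K s z) (hcone : HasConeNbhd n r K.space z)
    (hfin : K.faces.Finite) (hcard : ∀ t ∈ K.faces, t.card ≤ n + 1) (hs : s.card = n)
    (hlink : eulerChar (linkFaces K s) = 2) : r = 2 := by
  obtain ⟨a, b, hab, hpair⟩ := exists_linkFaces_eq_pair hfin (hs ▸ hcard) hlink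
  obtain ⟨ha, haK⟩ := singleton_mem_linkFaces_iff.1 (hpair ▸ Set.mem_insert {a} {{b}})
  obtain ⟨hb, hbK⟩ := singleton_mem_linkFaces_iff.1
    (hpair ▸ Set.mem_insert_of_mem {a} (Set.mem_singleton {b}))
  have hchart : ∀ c ∉ s, insert c s ∈ K.faces → ∃ φ γ, IsHalfChart
      (convexHull ℝ (insert c s : Finset (Euc N))) (vectorSpan ℝ (s : Set (Euc N))) z φ γ := by
    intro c hc hcK
    obtain ⟨lam, hlam⟩ := exists_isBarycentric (Finset.insert_nonempty c s) (K.indep hcK)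
    exact hlam.exists_isHalfChart hc h.mem_affineSpan fun v =>
      h.barycentric_pos hcK (Finset.subset_insert c s) hlam
  obtain ⟨φa, γa, hφa⟩ := hchart a ha haK
  obtain ⟨φb, γb, hφb⟩ := hchart b hb hbK
  have hrank := finrank_vectorSpan_add_one h.mem_faces
  rw [← hs, ← hrank] at hcone
  refine hcone.eq_two_of_isHalfChart hφa hφb ((Finset.finite_toSet _).isClosed_convexHull ℝ)
    ((Finset.finite_toSet _).isClosed_convexHull ℝ) (fun y hy => ?_)
    (h.mem_nhdsWithin_space hfin fun t ht hst => ?_)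
    (Set.union_subset (K.convexHull_subset_space haK) (K.convexHull_subset_space hbK))
  · have hys := K.inter_subset_convexHull haK hbK hy
    rw [← Finset.coe_inter, Finset.insert_inter_of_notMem (by simp [hab, ha]),
      Finset.inter_eq_left.2 (Finset.subset_insert b s)] at hys
    exact sub_mem_vectorSpan (convexHull_subset_affineSpan _ hys) h.mem_affineSpan
  · rcases hst.eq_or_ssubset with rfl | hst'
    · exact (convexHull_mono (by simp)).trans Set.subset_union_left
    · have hmem := sdiff_mem_linkFaces ht hst'
      rw [hpair] at hmem
      rw [← Finset.sdiff_union_of_subset hst]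
      rcases hmem with heq | heq <;> rw [heq, ← Finset.insert_eq]
      exacts [Set.subset_union_left, Set.subset_union_right]

theorem strRank_eq_one (hn : 1 ≤ n) (hfin : K.faces.Finite)
    (hcard : ∀ t ∈ K.faces, t.card ≤ n + 1)
    (hlink : ∀ s ∈ K.faces, s.card = n → eulerChar (linkFaces K s) = 2) {η : Finset (Euc N)}
    (hη : η ∈ K.faces) : strRank n K η = 1 := by
  rw [strRank, dif_neg]
  rintro ⟨r, hr, hsub⟩
  obtain ⟨x, hx⟩ : (openSimplex η).Nonempty := Set.Nonempty.intrinsicInterior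
    (convex_convexHull ℝ _) (by simpa using K.nonempty_of_mem_faces hη)
  obtain ⟨hxK, hxcone⟩ := hsub hx
  obtain ⟨z, hz, hcone, hskel⟩ := hxcone.exists_notMem_convexHull hxK hfin
  obtain ⟨s, hs⟩ := exists_isCarrier hz
  have hle := hcard s hs.mem_faces
  have hge : n ≤ s.card := not_lt.1 fun hlt => hskel s hs.mem_faces hlt hs.mem_convexHull
  obtain hsn | hsn : s.card = n ∨ s.card = n + 1 := by omega
  · exact hr (hs.eq_two_of_card_eq hcone hfin hcard hsn (hlink s hs.mem_faces hsn))
  · exact hr (hs.eq_two_of_card_eq_add_one hcone hn hfin hcard hsn)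

end StrRank

/-! ### Solid angles -/

section Cone

open Metric

theorem sum_powerset_neg_one_pow_mul_measureReal_biInter {ι X : Type*} [MeasurableSpace X]
    {μ : Measure X} [IsFiniteMeasure μ] {t : Finset ι} {s : ι → Set X}
    (hs : ∀ i ∈ t, MeasurableSet (s i)) :
    ∑ u ∈ t.powerset, (-1 : ℝ) ^ u.card * μ.real (⋂ i ∈ u, s i) =
      μ.real (⋂ i ∈ t, (s i)ᶜ) := by
  have hempty : t.powerset.filter (fun u => ¬u.Nonempty) = {∅} := by
    ext u
    simp +contextual [Finset.not_nonempty_iff_eq_empty]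
  rw [← Finset.sum_filter_add_sum_filter_not _ Finset.Nonempty, hempty, ← Set.compl_iUnion₂,
    measureReal_compl (Finset.measurableSet_biUnion t hs), measureReal_biUnion_eq_sum_powerset hs]
  simp [pow_succ, sub_eq_neg_add]

variable {ι E : Type*} [NormedAddCommGroup E] [NormedSpace ℝ E]

/-- The polyhedral cone cut out by the inequalities `0 ≤ l v` with `v ∈ T`. -/
def polyhedralCone (l : ι → E →ₗ[ℝ] ℝ) (T : Finset ι) : Set E :=
  ⋂ v ∈ T, {u | 0 ≤ l v u}

theorem mem_polyhedralCone {l : ι → E →ₗ[ℝ] ℝ} {T : Finset ι} {u : E} :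
    u ∈ polyhedralCone l T ↔ ∀ v ∈ T, 0 ≤ l v u :=
  Set.mem_iInter₂

theorem smul_mem_polyhedralCone_iff {l : ι → E →ₗ[ℝ] ℝ} {T : Finset ι} {t : ℝ} (ht : 0 < t)
    {u : E} : t • u ∈ polyhedralCone l T ↔ u ∈ polyhedralCone l T := by
  simp only [mem_polyhedralCone, map_smul, smul_eq_mul, mul_nonneg_iff_of_pos_left ht]

variable [FiniteDimensional ℝ E] [MeasurableSpace E] [BorelSpace E] {μ : Measure E}
  [μ.IsAddHaarMeasure]

open Pointwise in
theorem measureReal_ball_inter_cone {C : Set E} (hC : ∀ t : ℝ, 0 < t → ∀ u, t • u ∈ C ↔ u ∈ C)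
    (c : E) {ε : ℝ} (hε : 0 < ε) :
    μ.real (ball c ε ∩ {y | y - c ∈ C}) = ε ^ Module.finrank ℝ E * μ.real (ball 0 1 ∩ C) := by
  have hset : ball c ε ∩ {y | y - c ∈ C} = (fun y => -c + y) ⁻¹' (ε • (ball 0 1 ∩ C)) := by
    ext y
    simp only [Set.mem_inter_iff, Set.mem_preimage, Set.mem_smul_set_iff_inv_smul_mem₀ hε.ne',
      mem_ball, Set.mem_ofPred_eq, dist_eq_norm, sub_zero, neg_add_eq_sub, norm_smul, norm_inv,
      Real.norm_of_nonneg hε.le, inv_mul_lt_iff₀ hε, mul_one, hC _ (inv_pos.2 hε)]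
  rw [hset, measureReal_def, measure_preimage_add, Measure.addHaar_smul, ENNReal.toReal_mul,
    ENNReal.toReal_ofReal (abs_nonneg _), abs_of_pos (pow_pos hε _), measureReal_def]

theorem measureReal_ball_inter_compl_halfSpaces {l : ι → E →ₗ[ℝ] ℝ} {T : Finset ι}
    (hl : ∀ v ∈ T, l v ≠ 0) :
    μ.real (ball 0 1 ∩ ⋂ v ∈ T, {u | 0 ≤ l v u}ᶜ) = μ.real (ball 0 1 ∩ polyhedralCone l T) := by
  have hneg : ball 0 1 ∩ ⋂ v ∈ T, {u | 0 ≤ l v u}ᶜ =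
      (fun u => -u) ⁻¹' (ball 0 1 ∩ ⋂ v ∈ T, {u | 0 < l v u}) := by
    ext u
    simp
  have hker : ∀ᵐ u ∂μ, ∀ v ∈ T, l v u ≠ 0 := (Filter.eventually_all_finset T).2 fun v hv =>
    measure_mono_null (fun _ hu => not_not.1 hu)
      (Measure.addHaar_submodule μ (l v).ker (LinearMap.ker_eq_top.not.2 (hl v hv)))
  rw [hneg, measureReal_def, Measure.measure_preimage_neg]
  refine measureReal_congr ?_
  filter_upwards [hker] with u hu
  refine propext (and_congr_right fun _ => ?_)
  simp only [polyhedralCone, Set.mem_iInter₂, Set.mem_ofPred_eq]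
  exact forall₂_congr fun v hv => ⟨le_of_lt, fun h => h.lt_of_ne' (hu v hv)⟩

/-- Inclusion–exclusion turns the left-hand side into the measure of the part of the ball on which
all forms are negative, which is antipodal to the right-hand side up to a null set. -/
theorem sum_powerset_neg_one_pow_mul_measureReal_cone {l : ι → E →ₗ[ℝ] ℝ} {T : Finset ι}
    (hl : ∀ v ∈ T, l v ≠ 0) :
    ∑ U ∈ T.powerset, (-1 : ℝ) ^ U.card * μ.real (ball 0 1 ∩ polyhedralCone l U) =
      μ.real (ball 0 1 ∩ polyhedralCone l T) := by
  have hball : MeasurableSet (ball (0 : E) 1) := isOpen_ball.measurableSet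
  have : IsFiniteMeasure (μ.restrict (ball 0 1)) := ⟨by simpa using measure_ball_lt_top⟩
  have hincl := sum_powerset_neg_one_pow_mul_measureReal_biInter (μ := μ.restrict (ball 0 1))
    (s := fun v => {u | 0 ≤ l v u}) (t := T) fun v _ =>
      measurableSet_le measurable_const (l v).continuous_of_finiteDimensional.measurable
  simp only [measureReal_restrict_apply' hball, Set.inter_comm _ (ball (0 : E) 1)] at hincl
  exact hincl.trans (measureReal_ball_inter_compl_halfSpaces hl)

end Cone

section SolidAngle

open Metric Topology

variable {σ η τ : Finset (Euc N)} {lam : Euc N → Euc N →ᵃ[ℝ] ℝ}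

namespace IsBarycentric

theorem apply_centroid (h : IsBarycentric σ lam) (hη : η ⊆ σ) (hne : η.Nonempty) {v : Euc N}
    (hv : v ∈ σ) : lam v (η.centroid ℝ id) = if v ∈ η then (η.card : ℝ)⁻¹ else 0 := by
  have hw : ∑ i ∈ η, η.centroidWeights ℝ i = 1 := η.sum_centroidWeights_eq_one_of_nonempty ℝ hne
  have hterm : ∀ i ∈ η, η.centroidWeights ℝ i • (lam v ∘ id) i =
      if i = v then (η.card : ℝ)⁻¹ else 0 := fun i hi => by
    simp [h.apply_vertex v hv i (hη hi)]
  rw [Finset.centroid_def, Finset.map_affineCombination _ _ _ hw,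
    Finset.affineCombination_eq_linear_combination _ _ _ hw, Finset.sum_congr rfl hterm,
    Finset.sum_ite_eq']

theorem eventually_forall_nonneg_iff (h : IsBarycentric σ lam) (hη : η ⊆ σ) (hne : η.Nonempty) :
    ∀ᶠ y in 𝓝 (η.centroid ℝ id), (∀ v ∈ σ, 0 ≤ lam v y) ↔
      y - η.centroid ℝ id ∈ polyhedralCone (fun v => (lam v).linear) (σ \ η) := by
  have hpos : ∀ᶠ y in 𝓝 (η.centroid ℝ id), ∀ v ∈ η, 0 < lam v y := by
    refine (Filter.eventually_all_finset η).2 fun v hv =>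
      (lam v).continuous_of_finiteDimensional.continuousAt.eventually (lt_mem_nhds ?_)
    rw [h.apply_centroid hη hne (hη hv), if_pos hv]
    exact inv_pos.2 (Nat.cast_pos.2 hne.card_pos)
  have hlin : ∀ y, ∀ v ∈ σ \ η, (lam v).linear (y - η.centroid ℝ id) = lam v y := by
    intro y v hv
    obtain ⟨hvσ, hvη⟩ := Finset.mem_sdiff.1 hv
    rw [← vsub_eq_sub, AffineMap.linearMap_vsub, h.apply_centroid hη hne hvσ, if_neg hvη,
      vsub_eq_sub, sub_zero]
  filter_upwards [hpos] with y hy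
  rw [mem_polyhedralCone]
  refine ⟨fun hσ v hv => ?_, fun hcone v hv => ?_⟩
  · exact (hlin y v hv).symm ▸ hσ v (Finset.mem_sdiff.1 hv).1
  · by_cases hvη : v ∈ η
    · exact (hy v hvη).le
    · have hv' := Finset.mem_sdiff.2 ⟨hv, hvη⟩
      exact hlin y v hv' ▸ hcone v hv'

theorem solidAngle_eq (h : IsBarycentric σ lam) (hη : η ⊆ σ) (hne : η.Nonempty) :
    solidAngle η σ =
      volume.real (ball 0 1 ∩ polyhedralCone (fun v => (lam v).linear) (σ \ η)) /
        volume.real (ball (0 : Euc N) 1) := by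
  set c := η.centroid ℝ id
  obtain ⟨δ, hδ, hlocal⟩ := Metric.eventually_nhds_iff_ball.1
    (h.eventually_forall_nonneg_iff hη hne)
  refine (tendsto_const_nhds.congr' ?_).limUnder_eq
  filter_upwards [Ioo_mem_nhdsGT hδ] with ε hε
  have hset : ball c ε ∩ {y | ∃ a ∈ convexHull ℝ (σ : Set (Euc N)),
      ∃ w ∈ (vectorSpan ℝ (σ : Set (Euc N)))ᗮ, y = a + w} =
      ball c ε ∩ {y | y - c ∈ polyhedralCone (fun v => (lam v).linear) (σ \ η)} := by
    ext y
    refine and_congr_right fun hy => ?_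
    exact (h.exists_eq_add_orthogonal_iff (hne.mono hη)).trans
      (hlocal y (ball_subset_ball hε.2.le hy))
  have hball := measureReal_ball_inter_cone (μ := volume) (C := Set.univ) (by simp) c hε.1
  simp only [Set.mem_univ, Set.ofPred_true, Set.inter_univ] at hball
  have hcone := measureReal_ball_inter_cone (μ := volume)
    (fun t ht u => smul_mem_polyhedralCone_iff (l := fun v => (lam v).linear) (T := σ \ η) ht)
    c hε.1
  simp only [← measureReal_def]
  rw [hset, hcone, hball, mul_div_mul_left _ _ (pow_pos hε.1 _).ne']

theorem linear_ne_zero (h : IsBarycentric σ lam) (hη : η ⊆ σ) (hne : η.Nonempty) {v : Euc N}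
    (hv : v ∈ σ \ η) : (lam v).linear ≠ 0 := by
  obtain ⟨hvσ, hvη⟩ := Finset.mem_sdiff.1 hv
  obtain ⟨w, hw⟩ := hne
  intro hzero
  have hvw := (lam v).linearMap_vsub v w
  rw [hzero, h.apply_vertex v hvσ v hvσ, h.apply_vertex v hvσ w (hη hw), if_pos rfl,
    if_neg (ne_of_mem_of_not_mem hw hvη)] at hvw
  simp at hvw

end IsBarycentric

theorem sum_Icc_neg_one_pow_mul_solidAngle (hσ : AffineIndependent ℝ ((↑) : σ → Euc N))
    (hτ : τ ⊆ σ) (hne : τ.Nonempty) :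
    ∑ η ∈ Finset.Icc τ σ, (-1 : ℝ) ^ (σ.card - η.card) * solidAngle η σ = solidAngle τ σ := by
  obtain ⟨lam, h⟩ := exists_isBarycentric (hne.mono hτ) hσ
  rw [h.solidAngle_eq hτ hne, ← sum_powerset_neg_one_pow_mul_measureReal_cone
    fun v hv => h.linear_ne_zero hτ hne hv, Finset.sum_div]
  refine Finset.sum_nbij' (σ \ ·) (σ \ ·) (fun η hη => ?_) (fun U hU => ?_) (fun η hη => ?_)
    (fun U hU => ?_) fun η hη => ?_
  · exact Finset.mem_powerset.2 (Finset.sdiff_subset_sdiff subset_rfl (Finset.mem_Icc.1 hη).1)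
  · have hdisj : Disjoint τ U := Finset.disjoint_sdiff.mono_right (Finset.mem_powerset.1 hU)
    exact Finset.mem_Icc.2 ⟨Finset.subset_sdiff.2 ⟨hτ, hdisj⟩, Finset.sdiff_subset⟩
  · exact Finset.sdiff_sdiff_eq_self (Finset.mem_Icc.1 hη).2
  · exact Finset.sdiff_sdiff_eq_self ((Finset.mem_powerset.1 hU).trans Finset.sdiff_subset)
  · obtain ⟨hτη, hησ⟩ := Finset.mem_Icc.1 hη
    rw [h.solidAngle_eq hησ (hne.mono hτη), Finset.card_sdiff_of_subset hησ, mul_div_assoc]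

end SolidAngle

/-! ### Alternating sums over cofaces -/

section Curvature

variable {n : ℕ} {K : SimplicialComplex ℝ (Euc N)} {τ : Finset (Euc N)}

theorem ads_eq_zero {m : ℕ} (hm : Odd m) : ads m = 0 := by
  have hbernoulli : bernoulli (m + 2) = 0 :=
    bernoulli_eq_zero_of_odd (hm.add_even even_two) (by lia)
  simp [ads, hbernoulli]

theorem finsum_mem_faces_eq_sum {M : Type*} [AddCommMonoid M] (hfin : K.faces.Finite)
    (P : Finset (Euc N) → Prop) [DecidablePred P] (f : Finset (Euc N) → M) :
    ∑ᶠ η ∈ {η | η ∈ K.faces ∧ P η}, f η = ∑ η ∈ hfin.toFinset with P η, f η := by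
  rw [← finsum_mem_coe_finset]
  congr 1
  funext η
  simp

theorem defect_eq (hfin : K.faces.Finite) (η : Finset (Euc N)) :
    defect n K η =
      strRank n K η - ∑ σ ∈ hfin.toFinset with σ.card = n + 1 ∧ η ⊆ σ, solidAngle η σ := by
  rw [defect, nSimplicesOn, finsum_mem_faces_eq_sum hfin]

theorem sum_cofaces_neg_one_pow (hfin : K.faces.Finite) (τ : Finset (Euc N)) :
    ∑ η ∈ hfin.toFinset with τ ⊂ η, (-1 : ℤ) ^ (η.card - τ.card) =
      -eulerChar (linkFaces K τ) := by
  rw [eulerChar_linkFaces_eq_sum hfin, ← Finset.sum_neg_distrib]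
  refine Finset.sum_nbij' (· \ τ) (τ ∪ ·) (fun η hη => ?_) (fun ω hω => ?_) (fun η hη => ?_)
    (fun ω hω => ?_) fun η hη => ?_ <;>
    simp only [Finset.mem_filter, Set.Finite.mem_toFinset] at *
  · exact sdiff_mem_linkFaces hη.1 hη.2
  · obtain ⟨hωK, hdisj, hunion⟩ := hω
    have hωτ : ¬ω ⊆ τ := fun h =>
      (K.nonempty_of_mem_faces hωK).ne_empty (Finset.disjoint_self_iff_empty _ |>.1
        (hdisj.mono_left h))
    exact ⟨hunion, Finset.subset_union_left,
      fun h => hωτ (Finset.subset_union_right.trans h)⟩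
  · exact Finset.union_sdiff_of_subset hη.2.subset
  · exact Finset.union_sdiff_cancel_left hω.2.1
  · have hcard := Finset.card_lt_card hη.2
    rw [Finset.card_sdiff_of_subset hη.2.subset, ← Nat.sub_add_cancel (Nat.sub_pos_of_lt hcard),
      pow_succ, Nat.add_sub_cancel, mul_neg_one]

theorem asc_eq_sum_cofaces (hfin : K.faces.Finite) (hcard : ∀ t ∈ K.faces, t.card ≤ n + 1)
    (hne : τ.Nonempty) :
    asc n K τ = ads (τ.card - 1) * defect n K τ + ads (τ.card - 1) / 2 *
      ∑ η ∈ hfin.toFinset with τ ⊂ η, (-1 : ℝ) ^ (η.card - τ.card) * defect n K η := by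
  have hpos := hne.card_pos
  have hdim : ∀ η ∈ hfin.toFinset.filter (τ ⊂ ·), η.card - 1 ∈ Finset.Icc τ.card n := by
    intro η hη
    obtain ⟨hηK, hτη⟩ := Finset.mem_filter.1 hη
    have hlt := Finset.card_lt_card hτη
    have hle := hcard η (hfin.mem_toFinset.1 hηK)
    exact Finset.mem_Icc.2 (by lia)
  rw [asc, ← Finset.sum_fiberwise_of_maps_to hdim]
  congr 2
  refine Finset.sum_congr rfl fun i hi => ?_
  have hi := (Finset.mem_Icc.1 hi).1
  rw [finsum_mem_faces_eq_sum hfin, Finset.mul_sum, Finset.filter_filter]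
  refine Finset.sum_congr (Finset.filter_congr fun η _ => ⟨fun h => ?_, fun h => ?_⟩)
    fun η hη => ?_
  · exact ⟨Finset.ssubset_iff_subset_ne.2 ⟨h.2, by rintro rfl; lia⟩, by lia⟩
  · exact ⟨by lia, h.1.subset⟩
  · have hη := (Finset.mem_filter.1 hη).2
    rw [show i - (τ.card - 1) = η.card - τ.card by lia]

theorem sum_Ioc_neg_one_pow_mul_solidAngle {σ : Finset (Euc N)}
    (hσ : AffineIndependent ℝ ((↑) : σ → Euc N)) (hτ : τ ⊆ σ) (hne : τ.Nonempty)
    (hodd : Odd (σ.card - τ.card)) :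
    ∑ η ∈ Finset.Ioc τ σ, (-1 : ℝ) ^ (η.card - τ.card) * solidAngle η σ =
      -2 * solidAngle τ σ := by
  have hIcc := sum_Icc_neg_one_pow_mul_solidAngle hσ hτ hne
  rw [← Finset.add_sum_Ioc_eq_sum_Icc hτ, hodd.neg_one_pow] at hIcc
  have hsign : ∀ η ∈ Finset.Ioc τ σ, (-1 : ℝ) ^ (η.card - τ.card) * solidAngle η σ =
      -((-1 : ℝ) ^ (σ.card - η.card) * solidAngle η σ) := fun η hη => by
    obtain ⟨hτη, hησ⟩ := Finset.mem_Ioc.1 hη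
    have hτη := Finset.card_lt_card hτη
    have hησ := Finset.card_le_card hησ
    have hprod : (-1 : ℝ) ^ (η.card - τ.card) * (-1) ^ (σ.card - η.card) = -1 := by
      rw [← pow_add, show η.card - τ.card + (σ.card - η.card) = σ.card - τ.card by lia,
        hodd.neg_one_pow]
    have hsq : (-1 : ℝ) ^ (σ.card - η.card) * (-1) ^ (σ.card - η.card) = 1 := by
      rw [← mul_pow, neg_mul_neg, one_mul, one_pow]
    linear_combination solidAngle η σ *
      ((-1) ^ (σ.card - η.card) * hprod - (-1) ^ (η.card - τ.card) * hsq)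
  rw [Finset.sum_congr rfl hsign, Finset.sum_neg_distrib]
  linear_combination -hIcc

theorem sum_cofaces_sum_solidAngle (hfin : K.faces.Finite) (hne : τ.Nonempty)
    (hodd : Odd (n + 1 - τ.card)) :
    ∑ η ∈ hfin.toFinset with τ ⊂ η, (-1 : ℝ) ^ (η.card - τ.card) *
        ∑ σ ∈ hfin.toFinset with σ.card = n + 1 ∧ η ⊆ σ, solidAngle η σ =
      -2 * ∑ σ ∈ hfin.toFinset with σ.card = n + 1 ∧ τ ⊆ σ, solidAngle τ σ := by
  simp_rw [Finset.mul_sum]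
  rw [Finset.sum_comm' (t' := hfin.toFinset.filter fun σ => σ.card = n + 1 ∧ τ ⊆ σ)
    (s' := fun σ => Finset.Ioc τ σ) fun η σ => ?_]
  · refine Finset.sum_congr rfl fun σ hσ => ?_
    obtain ⟨hσK, hσn, hτσ⟩ := Finset.mem_filter.1 hσ
    exact sum_Ioc_neg_one_pow_mul_solidAngle (K.indep (hfin.mem_toFinset.1 hσK)) hτσ hne
      (hσn ▸ hodd)
  · simp only [Finset.mem_filter, Finset.mem_Ioc, Set.Finite.mem_toFinset]
    refine ⟨fun ⟨⟨_, hτη⟩, hσK, hσn, hησ⟩ => ⟨⟨hτη, hησ⟩, hσK, hσn, hτη.subset.trans hησ⟩,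
      fun ⟨⟨hτη, hησ⟩, hσK, hσn, _⟩ => ⟨⟨?_, hτη⟩, hσK, hσn, hησ⟩⟩
    exact K.down_closed hσK hησ (hne.mono hτη.subset)

theorem asc_eq_of_odd_codim (hfin : K.faces.Finite) (hcard : ∀ t ∈ K.faces, t.card ≤ n + 1)
    (hne : τ.Nonempty) (hodd : Odd (n + 1 - τ.card)) :
    asc n K τ = ads (τ.card - 1) * (strRank n K τ +
      (∑ η ∈ hfin.toFinset with τ ⊂ η, (-1 : ℝ) ^ (η.card - τ.card) * strRank n K η) / 2) := by
  simp_rw [asc_eq_sum_cofaces hfin hcard hne, defect_eq hfin, mul_sub, Finset.sum_sub_distrib,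
    sum_cofaces_sum_solidAngle hfin hne hodd]
  ring

end Curvature

/-- If `K` is a finite `n`-dimensional simplicial complex with `n` odd, `n ≥ 3`,
such that `χ(link(η, K)) = 2` for every even-dimensional simplex `η` of `K` of
dimension `i ≤ n - 1`, then the ascending stratified curvature vanishes at every
simplex of `K`. -/
theorem asc_eq_zero_of_links {N n : ℕ} (hn : 3 ≤ n) (hodd : Odd n)
    (K : SimplicialComplex ℝ (Euc N)) (hfin : K.faces.Finite) (hdim : IsNDim n K)
    (hlink : ∀ i : ℕ, Even i → i ≤ n - 1 → ∀ η ∈ K.faces, η.card = i + 1 →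
      eulerChar (linkFaces K η) = 2) :
    ∀ τ ∈ K.faces, asc n K τ = 0 := by
  intro τ hτ
  have hne : τ.Nonempty := K.nonempty_of_mem_faces hτ
  have hpos := hne.card_pos
  have hcard := hdim.1 τ hτ
  rcases Nat.even_or_odd (τ.card - 1) with heven | hodd_dim
  · have hcodim : Odd (n + 1 - τ.card) := by grind
    have hrank : ∀ η ∈ K.faces, strRank n K η = 1 := fun η =>
      strRank_eq_one (by lia) hfin hdim.1 fun s hs hsn =>
        hlink (n - 1) (by grind) le_rfl s hs (by lia)
    have hcofaces : ∑ η ∈ hfin.toFinset with τ ⊂ η, (-1 : ℝ) ^ (η.card - τ.card) = -2 := by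
      have hχ := sum_cofaces_neg_one_pow hfin τ
      rw [hlink (τ.card - 1) heven (by grind) τ hτ (by lia)] at hχ
      exact_mod_cast hχ
    have hsum : ∑ η ∈ hfin.toFinset with τ ⊂ η,
        (-1 : ℝ) ^ (η.card - τ.card) * strRank n K η = -2 := by
      rw [← hcofaces]
      refine Finset.sum_congr rfl fun η hη => ?_
      rw [hrank η (hfin.mem_toFinset.1 (Finset.mem_filter.1 hη).1), mul_one]
    rw [asc_eq_of_odd_codim hfin hdim.1 hne hcodim, hrank τ hτ, hsum]
    ring
  · simp [asc, ads_eq_zero hodd_dim]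

end AngleDefectPaper
end
end

section
/- Let K be a finite n-dimensional simplicial complex embedded in Euclidean space, where n is an odd integer with n ≥ 3. Suppose that χ(link(η^i, K)) = 2 for every i-simplex η^i of K, for every even integer i with 0 ≤ i ≤ n−1. Then χ(K) = 0, where χ denotes the combinatorial Euler characteristic Σ_k (−1)^k f_k. -/
open Filter MeasureTheory Geometry
open scoped BigOperators

noncomputable section

attribute [local instance 0] Classical.propDecidable

namespace AngleDefectPaper

variable {N : ℕ}

/-!
Weight every face `s`, the empty one included, by `(-X) ^ |s|` and let `F` be the sum of the
weights. Expanding `F(X + 1)` binomially, the coefficient contributed by a face `t` is the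
alternating count of the faces containing `t`, that is, `±(1 - χ(link t))`. When all links of
even-dimensional simplices have Euler characteristic `2`, the odd terms of `F(X + 1)` cancel those
of `F(X)`, so `F(X + 1) + F(X)` is an even polynomial. Hence `F(X) - F(1 - X)` changes sign under
`X ↦ X + 1`; as a polynomial it must vanish. At `X = 0` the resulting Dehn–Sommerville relation
`F(1 - X) = F(X)` reads `1 - χ(K) = 1`.
-/

open Finset Polynomial

lemma eq_zero_of_taylor_eq_neg {R : Type*} [Ring R] [IsAddTorsionFree R] {p : R[X]} {r : R}
    (h : taylor r p = -p) : p = 0 := by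
  have hlead : p.leadingCoeff = -p.leadingCoeff := by
    rw [← leadingCoeff_neg, ← h, leadingCoeff_taylor]
  exact leadingCoeff_eq_zero.1 (self_eq_neg.1 hlead)

lemma comp_one_sub_X_eq_self_of_taylor_one_add_self_even
    {R : Type*} [CommRing R] [IsAddTorsionFree R] {p : R[X]}
    (h : (taylor 1 p + p).comp (-X) = taylor 1 p + p) :
    p.comp (1 - X) = p := by
  suffices p - p.comp (1 - X) = 0 from (sub_eq_zero.1 this).symm
  have hcomp : p.comp (1 - X) + p.comp (-X) = taylor 1 p + p := by
    simpa [taylor_apply, comp_assoc, add_comm, ← sub_eq_add_neg] using h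
  have htaylor : taylor 1 (p.comp (1 - X)) = p.comp (-X) := by
    simp [taylor_apply, comp_assoc]
  refine eq_zero_of_taylor_eq_neg (r := 1) ?_
  rw [map_sub, htaylor]
  linear_combination -hcomp

variable {ι : Type*}

/-- The generating polynomial of a finite family of finite sets by cardinality, with signs. The
family of faces of a complex is meant to include the empty face here, which contributes `1`. -/
def facePolynomial (A : Finset (Finset ι)) : ℤ[X] :=
  ∑ s ∈ A, (-X) ^ #s

lemma eval_one_facePolynomial (A : Finset (Finset ι)) :
    (facePolynomial A).eval 1 = ∑ s ∈ A, (-1) ^ #s := by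
  simp [facePolynomial, eval_finsetSum]

lemma eval_zero_facePolynomial {A : Finset (Finset ι)} (hA : ∅ ∈ A) :
    (facePolynomial A).eval 0 = 1 := by
  simp [facePolynomial, eval_finsetSum, zero_pow_eq, hA]

/-- The Euler characteristic `Σ_k (-1)^k f_k` of a family of finite sets over any vertex type; a
set of `k + 1` elements is a `k`-simplex and the empty set is not counted. It unfolds to `eulerChar`
when the vertices are points of `Euc N`. -/
def abstractEulerChar (F : Set (Finset ι)) : ℤ :=
  ∑ᶠ k : ℕ, (-1) ^ k * ({s ∈ F | #s = k + 1}.ncard : ℤ)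

lemma abstractEulerChar_insert_empty (F : Set (Finset ι)) :
    abstractEulerChar (insert ∅ F) = abstractEulerChar F := by
  have hfaces (k : ℕ) : {s ∈ insert ∅ F | #s = k + 1} = {s ∈ F | #s = k + 1} := by
    ext s
    obtain rfl | hs := s.eq_empty_or_nonempty <;> simp_all [Finset.Nonempty.ne_empty]
  simp only [abstractEulerChar, hfaces]

lemma abstractEulerChar_coe (A : Finset (Finset ι)) :
    abstractEulerChar (A : Set (Finset ι)) =
      ∑ k ∈ range (A.sup card), (-1) ^ k * (#{s ∈ A | #s = k + 1} : ℤ) := by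
  have hncard (k : ℕ) : {s ∈ (A : Set (Finset ι)) | #s = k + 1}.ncard = #{s ∈ A | #s = k + 1} := by
    simp [← Set.ncard_coe_finset]
  simp only [abstractEulerChar, hncard]
  refine finsum_eq_sum_of_support_subset _ fun k hk => ?_
  obtain ⟨s, hs⟩ : {s ∈ A | #s = k + 1}.Nonempty := by
    rw [← card_ne_zero]
    intro h
    simp [h] at hk
  obtain ⟨hsA, hcard⟩ := mem_filter.1 hs
  have hle : #s ≤ A.sup card := le_sup hsA
  simp only [coe_range, Set.mem_Iio]
  omega

lemma sum_neg_one_pow_card_eq_one_sub_abstractEulerChar {A : Finset (Finset ι)} (hA : ∅ ∈ A) :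
    ∑ s ∈ A, (-1) ^ #s = 1 - abstractEulerChar (A : Set (Finset ι)) := by
  have hempty : #{s ∈ A | #s = 0} = 1 :=
    card_eq_one.2 ⟨∅, by ext s; simp only [mem_filter, card_eq_zero, mem_singleton]; grind⟩
  calc
    ∑ s ∈ A, (-1 : ℤ) ^ #s
      = ∑ m ∈ range (A.sup card + 1), ∑ s ∈ A with #s = m, (-1) ^ m :=
        (sum_fiberwise_of_maps_to' (fun s hs => mem_range_succ_iff.2 (le_sup (f := card) hs))
          fun m : ℕ => (-1 : ℤ) ^ m).symm
    _ = ∑ m ∈ range (A.sup card + 1), (-1) ^ m * (#{s ∈ A | #s = m} : ℤ) := by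
        simp only [sum_const, nsmul_eq_mul, mul_comm]
    _ = 1 - abstractEulerChar (A : Set (Finset ι)) := by
        rw [sum_range_succ', hempty, abstractEulerChar_coe, sub_eq_neg_add, ← sum_neg_distrib]
        simp [pow_succ]

variable (K : PreAbstractSimplicialComplex ι)

lemma isLowerSet_insert_empty_faces : IsLowerSet (insert ∅ K.faces) := by
  rintro s t hts (rfl | hs)
  · exact .inl (subset_empty.1 hts)
  · exact t.eq_empty_or_nonempty.imp_right fun ht => (K.isRelLowerSet_faces hs).2 hts ht

variable [DecidableEq ι]

lemma taylor_one_facePolynomial {A : Finset (Finset ι)} (hA : IsLowerSet (A : Set (Finset ι))) :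
    taylor 1 (facePolynomial A) = ∑ t ∈ A, C (∑ s ∈ A with t ⊆ s, (-1) ^ #s) * X ^ #t := by
  have hbinomial (s : Finset ι) (hs : s ∈ A) :
      taylor 1 ((-X : ℤ[X]) ^ #s) = ∑ t ∈ A with t ⊆ s, C ((-1) ^ #s) * X ^ #t := by
    have hpowerset : s.powerset = {t ∈ A | t ⊆ s} := by
      ext t
      simpa using fun hts => hA hts hs
    rw [← mul_sum, ← hpowerset, taylor_pow, map_neg, taylor_X, neg_pow, C_1,
      ← sum_pow_mul_eq_add_pow]
    simp
  simp only [facePolynomial, map_sum, sum_mul]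
  rw [sum_congr rfl hbinomial]
  exact sum_comm' fun s t => by simp only [mem_filter]; tauto

lemma facePolynomial_comp_one_sub_X {A : Finset (Finset ι)}
    (hA : IsLowerSet (A : Set (Finset ι)))
    (hodd : ∀ t ∈ A, Odd #t → ∑ s ∈ A with t ⊆ s, (-1 : ℤ) ^ #s = 1) :
    (facePolynomial A).comp (1 - X) = facePolynomial A := by
  apply comp_one_sub_X_eq_self_of_taylor_one_add_self_even
  rw [taylor_one_facePolynomial hA, facePolynomial, ← sum_add_distrib, Polynomial.sum_comp]
  refine sum_congr rfl fun t ht => ?_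
  obtain heven | hcard := Nat.even_or_odd #t
  · simp [heven.neg_pow]
  · simp [hodd t ht hcard, hcard.neg_pow]

/-- The link of `η` in an abstract simplicial complex, without the empty face. It unfolds to
`linkFaces` for a complex in `Euc N`. -/
def abstractLink (η : Finset ι) : Set (Finset ι) :=
  {ω | ω ∈ K.faces ∧ Disjoint η ω ∧ η ∪ ω ∈ K.faces}

variable {η : Finset ι}

lemma image_sdiff_cofaces_eq_insert_empty_abstractLink (hη : η ∈ K.faces) :
    (· \ η) '' {s ∈ K.faces | η ⊆ s} = insert ∅ (abstractLink K η) := by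
  ext ω
  simp only [Set.mem_image, Set.mem_insert_iff]
  constructor
  · rintro ⟨s, ⟨hs, hηs⟩, rfl⟩
    refine (s \ η).eq_empty_or_nonempty.imp_right fun hne => ?_
    exact ⟨(K.isRelLowerSet_faces hs).2 sdiff_subset hne, disjoint_sdiff,
      by rwa [union_sdiff_of_subset hηs]⟩
  · rintro (rfl | ⟨-, hdisj, hunion⟩)
    · exact ⟨η, ⟨hη, Subset.rfl⟩, Finset.sdiff_self η⟩
    · exact ⟨η ∪ ω, ⟨hunion, subset_union_left⟩, union_sdiff_cancel_left hdisj⟩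

lemma sum_cofaces_neg_one_pow_card {A : Finset (Finset ι)}
    (hA : (A : Set (Finset ι)) = insert ∅ K.faces) (hη : η ∈ K.faces) :
    ∑ s ∈ A with η ⊆ s, (-1) ^ #s = (-1) ^ #η * (1 - abstractEulerChar (abstractLink K η)) := by
  have hcofaces : (({s ∈ A | η ⊆ s} : Finset _) : Set (Finset ι)) = {s ∈ K.faces | η ⊆ s} := by
    have hne : η ≠ ∅ := (K.isRelLowerSet_faces hη).1.ne_empty
    ext s
    have hs : η ⊆ s → s ≠ ∅ := by rintro h rfl; exact hne (subset_empty.1 h)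
    rw [coe_filter, Set.mem_ofPred_eq, ← mem_coe, hA, Set.mem_insert_iff, Set.mem_ofPred_eq]
    tauto
  have himage : (image (· \ η) {s ∈ A | η ⊆ s} : Set (Finset ι)) =
      insert ∅ (abstractLink K η) := by
    rw [coe_image, hcofaces, image_sdiff_cofaces_eq_insert_empty_abstractLink K hη]
  have hinj : Set.InjOn (· \ η) ({s ∈ A | η ⊆ s} : Finset _) := by
    intro s hs t ht hst
    rw [← union_sdiff_of_subset (mem_filter.1 hs).2, ← union_sdiff_of_subset (mem_filter.1 ht).2]
    exact congrArg (η ∪ ·) hst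
  have hempty : ∅ ∈ image (· \ η) {s ∈ A | η ⊆ s} := by
    rw [← mem_coe, himage]
    exact Set.mem_insert _ _
  rw [← abstractEulerChar_insert_empty, ← himage,
    ← sum_neg_one_pow_card_eq_one_sub_abstractEulerChar hempty, sum_image hinj, mul_sum]
  refine sum_congr rfl fun s hs => ?_
  rw [← pow_add, add_comm, card_sdiff_add_card_eq_card (mem_filter.1 hs).2]

theorem eulerChar_eq_zero_of_links_general (hfin : K.faces.Finite)
    (hlink : ∀ η ∈ K.faces, Odd #η → abstractEulerChar (abstractLink K η) = 2) :
    abstractEulerChar K.faces = 0 := by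
  obtain ⟨A, hA⟩ := (hfin.insert ∅).exists_finset_coe
  have hcofaces : ∀ t ∈ A, Odd #t → ∑ s ∈ A with t ⊆ s, (-1 : ℤ) ^ #s = 1 := by
    intro t ht hodd
    have htK : t ∈ K.faces :=
      (hA ▸ mem_coe.2 ht : t ∈ insert ∅ K.faces).resolve_left (by rintro rfl; simp at hodd)
    simp [sum_cofaces_neg_one_pow_card K hA htK, hlink t htK hodd, hodd.neg_one_pow]
  have hempty : ∅ ∈ A := by simp [← mem_coe, hA]
  have hsymm : (facePolynomial A).eval 1 = (facePolynomial A).eval 0 := by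
    simpa using congrArg (eval 0)
      (facePolynomial_comp_one_sub_X (hA ▸ isLowerSet_insert_empty_faces K) hcofaces)
  rw [eval_one_facePolynomial, eval_zero_facePolynomial hempty,
    sum_neg_one_pow_card_eq_one_sub_abstractEulerChar hempty, hA,
    abstractEulerChar_insert_empty] at hsymm
  linarith

/-- If `K` is a finite `n`-dimensional simplicial complex with `n` odd, `n ≥ 3`,
such that `χ(link(η, K)) = 2` for every even-dimensional simplex `η` of `K` of
dimension `i ≤ n - 1`, then `χ(K) = 0`. -/
theorem eulerChar_eq_zero_of_links {N n : ℕ} (hn : 3 ≤ n) (hodd : Odd n)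
    (K : SimplicialComplex ℝ (Euc N)) (hfin : K.faces.Finite) (hdim : IsNDim n K)
    (hlink : ∀ i : ℕ, Even i → i ≤ n - 1 → ∀ η ∈ K.faces, η.card = i + 1 →
      eulerChar (linkFaces K η) = 2) :
    eulerChar K.faces = 0 :=
  eulerChar_eq_zero_of_links_general K.toPreAbstractSimplicialComplex hfin fun η hη ⟨m, hm⟩ =>
    hlink (2 * m) (even_two_mul m) (by grind [hdim.1 η hη]) η hη hm

end AngleDefectPaper
end
end
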